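/- arXiv:1512.02903 — 2 statements merged into one kernel-verified Lean document; each statement's English description precedes it below -/
import Mathlib

section
/- For every positive integer p there exists a constant c_p ≥ 1, depending only on p, with the following property. Let 𝒰 be a doubling covering, with charts ψ̃_j : B₄ ⊆ ℂⁿ → ℂ^N analytic and injective with images in Y ⊆ ℂ^N, of a compact set G ⊆ Y; let f : Y → ℂ be such that f ∘ ψ̃_j is analytic and sectionally p-valent on B₄ for every chart; let Ω ⊆ G be compact; and let 0 < ρ ≤ 1 and a positive integer ℓ(𝒰) ≤ κ(𝒰) be such that every point z ∈ G is contained in the last chart of some chain of at most ℓ(𝒰) charts of 𝒰 whose first chart U_{j₁} satisfies ρ(U_{j₁}, Ω) ≥ ρ and in which every pair of consecutive charts has intersection radius at least ρ. Then sup_G |f| ≤ (c_p/ρ^p)^{ℓ(𝒰)} · sup_Ω |f| ≤ (c_p/ρ^p)^{κ(𝒰)} · sup_Ω |f|. -/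
open Metric Set

noncomputable section

/-- A doubling covering of `G` in `Y ⊆ ℂ^N`, with charts given by analytic injective maps
`ψ̃_j` defined on an open neighborhood of the closed ball `B̄₄ ⊆ ℂᵏ`, with images in `Y`,
such that the charts `U_j = ψ̃_j(B₁)` cover `G`. -/
structure DoublingCovering (k N : ℕ) (G Y : Set (EuclideanSpace ℂ (Fin N))) where
  /-- the number of charts `κ(𝒰)` -/
  kappa : ℕ
  /-- the chart maps -/
  psi : Fin kappa → EuclideanSpace ℂ (Fin k) → EuclideanSpace ℂ (Fin N)
  /-- the open neighborhoods of `B̄₄` on which the chart maps are analytic and injective -/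
  dom : Fin kappa → Set (EuclideanSpace ℂ (Fin k))
  dom_open : ∀ j, IsOpen (dom j)
  dom_superset : ∀ j, closedBall (0 : EuclideanSpace ℂ (Fin k)) 4 ⊆ dom j
  analytic : ∀ j, AnalyticOnNhd ℂ (psi j) (dom j)
  injOn : ∀ j, Set.InjOn (psi j) (dom j)
  mapsTo : ∀ j, Set.MapsTo (psi j) (dom j) Y
  covers : G ⊆ ⋃ j, psi j '' ball (0 : EuclideanSpace ℂ (Fin k)) 1

namespace DoublingCovering

variable {k N : ℕ} {G Y : Set (EuclideanSpace ℂ (Fin N))}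

/-- The chart `U_j = ψ̃_j(B₁)`. -/
def chart (U : DoublingCovering k N G Y) (j : Fin U.kappa) :
    Set (EuclideanSpace ℂ (Fin N)) :=
  U.psi j '' ball 0 1

/-- `ψ̃_j⁻¹(U_j ∩ S)` (the preimage taken inside `B₁`) contains a ball of radius `ρ`. -/
def RadGe (U : DoublingCovering k N G Y) (j : Fin U.kappa)
    (S : Set (EuclideanSpace ℂ (Fin N))) (ρ : ℝ) : Prop :=
  ∃ c : EuclideanSpace ℂ (Fin k),
    ball c ρ ⊆ {x ∈ ball (0 : EuclideanSpace ℂ (Fin k)) 1 | U.psi j x ∈ U.chart j ∩ S}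

/-- The intersection radius `ρ(U_i, U_j)` of two charts is at least `ρ`. -/
def InterGe (U : DoublingCovering k N G Y) (i j : Fin U.kappa) (ρ : ℝ) : Prop :=
  U.RadGe i (U.chart j) ρ ∧ U.RadGe j (U.chart i) ρ

/-- A chain of at most `L` pairwise distinct charts whose first chart satisfies
`ρ(U_{j₁}, Ω) ≥ ρ`, whose consecutive intersection radii are at least `ρ` (in particular
consecutive charts intersect), and whose last chart contains `z`. -/
def ChainFrom (U : DoublingCovering k N G Y) (Ω : Set (EuclideanSpace ℂ (Fin N)))
    (ρ : ℝ) (L : ℕ) (z : EuclideanSpace ℂ (Fin N)) : Prop :=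
  ∃ (l : ℕ) (hl : 0 < l) (js : Fin l → Fin U.kappa), l ≤ L ∧ Function.Injective js ∧
    U.RadGe (js ⟨0, hl⟩) Ω ρ ∧
    (∀ m : ℕ, (h : m + 1 < l) → U.InterGe (js ⟨m, by omega⟩) (js ⟨m + 1, h⟩) ρ) ∧
    z ∈ U.chart (js ⟨l - 1, by omega⟩)

end DoublingCovering

/-- `f` is sectionally `p`-valent in `W ⊆ ℂⁿ`: on every complex affine line
`L = {a + t·b : t ∈ ℂ}` (with `b ≠ 0`) and every `c ∈ ℂ`, the equation `f = c` has at most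
`p` solutions on `L ∩ W`. -/
def SectionallyPValentOn {n : ℕ} (f : EuclideanSpace ℂ (Fin n) → ℂ)
    (W : Set (EuclideanSpace ℂ (Fin n))) (p : ℕ) : Prop :=
  ∀ a b : EuclideanSpace ℂ (Fin n), b ≠ 0 → ∀ c : ℂ, ∀ s : Finset ℂ,
    (∀ t ∈ s, a + t • b ∈ W ∧ f (a + t • b) = c) → s.card ≤ p

theorem dim_cartan_le (F : ℝ → ℂ) (hF : Continuous F) (C : ℝ) (S : Set ℂ) (hS : S.Countable)
    (H : ∀ a : ℂ, ‖a‖ = 1 → a ∉ S →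
      ∫ β in (0:ℝ)..2 * Real.pi, Real.log ‖F β - a‖ ≤ C) :
    ∫ β in (0:ℝ)..2 * Real.pi, Real.posLog ‖F β‖ ≤ C := by
  have hpi : (0:ℝ) ≤ 2 * Real.pi := Real.two_pi_pos.le
  set μ : MeasureTheory.Measure ℝ := MeasureTheory.volume.restrict (Ioc 0 (2 * Real.pi)) with hμ
  let K : ℝ → ℝ → ℝ := fun α β => Real.log ‖F β - circleMap 0 1 α‖
  have hKmeas : Measurable (fun q : ℝ × ℝ => K q.1 q.2) := by
    have := hF.measurable
    simp only [K]; fun_prop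
  have hslice : ∀ β, MeasureTheory.Integrable (fun α => K α β) μ := by
    intro β
    apply (intervalIntegrable_iff_integrableOn_Ioc_of_le hpi).1
    simpa [K, norm_sub_rev, CircleIntegrable] using circleIntegrable_log_norm_sub_const (a := F β) (c := 0) 1
  have hsliceval : ∀ β, ∫ α, K α β ∂μ = 2 * Real.pi * Real.posLog ‖F β‖ := by
    intro β
    have h_avg : Real.circleAverage (fun z => Real.log ‖z - F β‖) 0 1 = Real.posLog ‖F β‖ :=
      circleAverage_log_norm_sub_const_eq_posLog
    rw [← h_avg, Real.circleAverage_def, intervalIntegral.integral_of_le hpi, smul_eq_mul,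
      ← mul_assoc, mul_inv_cancel₀ Real.two_pi_pos.ne', one_mul]
    simp only [K, norm_sub_rev]
    rfl
  obtain ⟨D, hD⟩ := (isCompact_Icc (a := (0:ℝ)) (b := 2 * Real.pi)).exists_bound_of_continuousOn hF.continuousOn
  have hD0 : 0 ≤ D := le_trans (norm_nonneg _) (hD 0 ⟨le_rfl, hpi⟩)
  set B := Real.log (D + 2) with hB
  have hB0 : 0 ≤ B := Real.log_nonneg (by linarith)
  have hKle : ∀ β ∈ Ioc (0:ℝ) (2 * Real.pi), ∀ α, K α β ≤ B := by
    intro β hβ α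
    have h1 : ‖F β - circleMap 0 1 α‖ ≤ D + 2 := by
      have := hD β ⟨hβ.1.le, hβ.2⟩
      have h2 := norm_sub_le (F β) (circleMap 0 1 α)
      simp at h2
      linarith
    rcases eq_or_lt_of_le (norm_nonneg (F β - circleMap 0 1 α)) with h | h
    · simp only [K, ← h, Real.log_zero]; exact hB0
    · exact Real.log_le_log h h1
  have hint : MeasureTheory.Integrable (fun q : ℝ × ℝ => K q.1 q.2) (μ.prod μ) := by
    refine (MeasureTheory.integrable_prod_iff' hKmeas.aestronglyMeasurable).2
      ⟨Filter.Eventually.of_forall hslice, ?_⟩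
    refine MeasureTheory.Integrable.mono' (g := fun _ => 4 * Real.pi * B)
      (MeasureTheory.integrable_const _) ?_ ?_
    · exact (hKmeas.norm.stronglyMeasurable.integral_prod_left').aestronglyMeasurable
    · refine (MeasureTheory.ae_restrict_iff' measurableSet_Ioc).2 (Filter.Eventually.of_forall ?_)
      intro β hβ
      rw [Real.norm_of_nonneg (MeasureTheory.integral_nonneg (fun _ => norm_nonneg _))]
      have h1 : ∫ α, ‖K α β‖ ∂μ ≤ ∫ α, (2 * B - K α β) ∂μ := by
        apply MeasureTheory.integral_mono (hslice β).norm
        · exact (MeasureTheory.integrable_const _).sub (hslice β)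
        · intro α
          have := hKle β hβ α
          simp only [Real.norm_eq_abs]
          rw [abs_le]
          constructor <;> linarith
      rw [MeasureTheory.integral_sub (MeasureTheory.integrable_const _) (hslice β), hsliceval] at h1
      have h2 : ∫ _α : ℝ, 2 * B ∂μ = 2 * Real.pi * (2 * B) := by
        simp [hμ, MeasureTheory.measureReal_def, Real.pi_pos.le]
      rw [h2] at h1
      have h3 : 0 ≤ 2 * Real.pi * Real.posLog ‖F β‖ := mul_nonneg hpi Real.posLog_nonneg
      simp only at h1 ⊢
      linarith
  have hswap : ∫ β, ∫ α, K α β ∂μ ∂μ = ∫ α, ∫ β, K α β ∂μ ∂μ :=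
    (MeasureTheory.integral_integral_swap hint).symm
  have hle : ∫ α, ∫ β, K α β ∂μ ∂μ ≤ ∫ _α : ℝ, C ∂μ := by
    apply MeasureTheory.integral_mono_ae hint.integral_prod_left (MeasureTheory.integrable_const _)
    have hc : (circleMap 0 1 ⁻¹' S).Countable := hS.preimage_circleMap 0 one_ne_zero
    have hz : μ (circleMap 0 1 ⁻¹' S) = 0 := hc.measure_zero μ
    filter_upwards [MeasureTheory.compl_mem_ae_iff.2 hz] with α hα
    have := H (circleMap 0 1 α) (by simp) hα
    rwa [intervalIntegral.integral_of_le hpi] at this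
  have h4 : ∫ _α : ℝ, C ∂μ = 2 * Real.pi * C := by
    simp [hμ, MeasureTheory.measureReal_def, Real.pi_pos.le]
  simp only [hsliceval] at hswap
  rw [MeasureTheory.integral_const_mul] at hswap
  rw [intervalIntegral.integral_of_le hpi]
  rw [← hswap, h4] at hle
  exact le_of_mul_le_mul_left hle Real.two_pi_pos

theorem dim_poisson_le (R : ℝ) (Z : Finset ℂ) (hZ : ∀ a ∈ Z, a ∈ ball (0:ℂ) R) :
    ∀ h : ℂ → ℂ, AnalyticOnNhd ℂ h (closedBall 0 R) →
      (∀ z ∈ closedBall (0:ℂ) R, h z = 0 → z ∈ Z) → ∀ w ∈ ball (0:ℂ) R, h w ≠ 0 →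
      Real.log ‖h w‖ ≤ Real.circleAverage (poissonKernel 0 w • fun z => Real.log ‖h z‖) 0 R := by
  induction Z using Finset.induction_on with
  | empty =>
    intro h hh hz w hw _
    have hharm : InnerProductSpace.HarmonicOnNhd (fun z => Real.log ‖h z‖) (closedBall 0 R) := by
      intro z hzz
      exact (hh z hzz).harmonicAt_log_norm (fun h0 => by simpa using hz z hzz h0)
    exact (hharm.circleAverage_poissonKernel_smul hw).ge
  | insert a Z haZ ih =>
    intro h hh hz w hw hw0
    have haR : a ∈ ball (0:ℂ) R := hZ a (Finset.mem_insert_self _ _)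
    have haR' : ‖a‖ < R := by simpa using haR
    have hR : 0 < R := lt_of_le_of_lt (norm_nonneg _) haR'
    have ha := hh a (ball_subset_closedBall haR)
    have hntop : ¬ ∀ᶠ z in nhds a, h z = 0 := by
      intro hev
      exact hw0 (hh.eqOn_zero_of_preconnected_of_eventuallyEq_zero
        (convex_closedBall 0 R).isPreconnected (ball_subset_closedBall haR) hev
        (ball_subset_closedBall hw))
    obtain ⟨n, g, hg, hga, hgeq⟩ := ha.exists_eventuallyEq_pow_smul_nonzero_iff.2 hntop
    let h1 : ℂ → ℂ := Function.update (fun z => h z / (z - a) ^ n) a (g a)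
    let b : ℂ → ℂ := fun z => (((R:ℂ) ^ 2 - (starRingEnd ℂ) a * z) / R) ^ n
    have hh1a : AnalyticAt ℂ h1 a := by
      refine hg.congr ?_
      filter_upwards [hgeq] with z hz
      by_cases hza : z = a
      · subst hza; simp [h1]
      · have : (z - a) ^ n ≠ 0 := pow_ne_zero _ (sub_ne_zero.2 hza)
        simp only [h1, Function.update_of_ne hza]
        rw [hz, smul_eq_mul]; field_simp
    have hh1 : AnalyticOnNhd ℂ h1 (closedBall 0 R) := by
      intro z hzR
      by_cases hza : z = a
      · subst hza; exact hh1a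
      · have h2 : AnalyticAt ℂ (fun z => h z / (z - a) ^ n) z :=
          (hh z hzR).div (by fun_prop) (pow_ne_zero _ (sub_ne_zero.2 hza))
        refine h2.congr ?_
        filter_upwards [isOpen_ne.mem_nhds hza] with y hy
        simp [h1, Function.update_of_ne hy]
    have hban : AnalyticOnNhd ℂ b (closedBall 0 R) := by
      intro z _
      simp only [b]
      have : (R:ℂ) ≠ 0 := by exact_mod_cast hR.ne'
      fun_prop (disch := assumption)
    have hb0 : ∀ z ∈ closedBall (0:ℂ) R, b z ≠ 0 := by
      intro z hz
      have hz' : ‖z‖ ≤ R := by simpa using hz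
      refine pow_ne_zero _ (div_ne_zero ?_ (by exact_mod_cast hR.ne'))
      intro h0
      have h3 : ‖(R:ℂ) ^ 2‖ = ‖(starRingEnd ℂ) a * z‖ := by rw [sub_eq_zero.1 h0]
      simp [abs_of_pos hR] at h3
      nlinarith [norm_nonneg z, norm_nonneg a]
    have hsph : ∀ z ∈ sphere (0:ℂ) R, ‖b z‖ = ‖z - a‖ ^ n := by
      intro z hz
      have hz' : ‖z‖ = R := by simpa using hz
      simp only [b, norm_pow, norm_div]
      congr 1
      have : (R:ℂ)^2 = (starRingEnd ℂ) z * z := by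
        rw [← Complex.normSq_eq_conj_mul_self, Complex.normSq_eq_norm_sq, hz']; norm_cast
      rw [this, ← sub_mul, ← map_sub, norm_mul, Complex.norm_conj, hz']
      simp [abs_of_pos hR]
      field_simp
    have hin : ∀ z ∈ closedBall (0:ℂ) R, ‖z - a‖ ^ n ≤ ‖b z‖ := by
      intro z hz
      have hz' : ‖z‖ ≤ R := by simpa using hz
      simp only [b, norm_pow, norm_div]
      gcongr
      simp only [Complex.norm_real, Real.norm_eq_abs, abs_of_pos hR]
      rw [le_div_iff₀ hR]
      apply le_of_sq_le_sq _ (norm_nonneg _)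
      rw [mul_pow, ← Complex.normSq_eq_norm_sq, ← Complex.normSq_eq_norm_sq]
      have e1 : ‖z‖^2 = z.re*z.re + z.im*z.im := by
        rw [← Complex.normSq_eq_norm_sq, Complex.normSq_apply]
      have e2 : ‖a‖^2 = a.re*a.re + a.im*a.im := by
        rw [← Complex.normSq_eq_norm_sq, Complex.normSq_apply]
      have e3 : Complex.normSq ((R:ℂ) ^ 2 - (starRingEnd ℂ) a * z) - Complex.normSq (z - a) * R ^ 2
          = (R^2 - ‖z‖^2) * (R^2 - ‖a‖^2) := by
        rw [e1, e2]
        simp [Complex.normSq_apply, pow_two]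
        ring
      have : 0 ≤ (R^2 - ‖z‖^2) * (R^2 - ‖a‖^2) := by
        apply mul_nonneg <;> nlinarith [norm_nonneg z, norm_nonneg a]
      linarith
    have key := ih (fun c hc => hZ c (Finset.mem_insert_of_mem hc)) (fun z => h1 z * b z)
      (hh1.mul hban) ?_ w hw
    · have hprod : ∀ z, z ≠ a → ‖h1 z * b z‖ = ‖h z‖ * (‖b z‖ / ‖z - a‖ ^ n) := by
        intro z hza
        simp only [h1, Function.update_of_ne hza, norm_mul, norm_div, norm_pow]
        ring
      have hRHS : Real.circleAverage (poissonKernel 0 w • fun z => Real.log ‖h1 z * b z‖) 0 R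
          = Real.circleAverage (poissonKernel 0 w • fun z => Real.log ‖h z‖) 0 R := by
        apply Real.circleAverage_congr_sphere
        intro z hzs
        rw [abs_of_pos hR] at hzs
        have hza : z ≠ a := by
          rintro rfl
          have : ‖z‖ = R := by simpa using hzs
          linarith
        have : ‖z - a‖ ^ n ≠ 0 := pow_ne_zero _ (norm_ne_zero_iff.2 (sub_ne_zero.2 hza))
        simp only [Pi.smul_apply', hprod z hza, hsph z hzs, div_self this, mul_one]
      by_cases hwa : w = a
      · -- then the local order is zero
        have hn : n = 0 := by
          by_contra hn
          have := hgeq.self_of_nhds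
          rw [hwa] at hw0
          simp [hn] at this
          exact hw0 this
        have hbw : ‖b w‖ = 1 := by simp [b, hn]
        have hga' : h1 w = h w := by
          have := hgeq.self_of_nhds
          simp [hn] at this
          rw [hwa, this]; simp [h1]
        rw [hga', norm_mul, hbw, mul_one, hRHS] at key
        exact key (mul_ne_zero hw0 (norm_ne_zero_iff.1 (by rw [hbw]; norm_num)))
      · have hpos : 0 < ‖w - a‖ ^ n := pow_pos (norm_pos_iff.2 (sub_ne_zero.2 hwa)) _
        have hle : ‖h w‖ ≤ ‖h1 w * b w‖ := by
          rw [hprod w hwa]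
          have : 1 ≤ ‖b w‖ / ‖w - a‖ ^ n :=
            (one_le_div hpos).2 (hin w (ball_subset_closedBall hw))
          nlinarith [norm_nonneg (h w)]
        have hhw : 0 < ‖h w‖ := norm_pos_iff.2 hw0
        rw [hRHS] at key
        exact (Real.log_le_log hhw hle).trans (key (norm_pos_iff.1 (hhw.trans_le hle)))
    · intro z hzR hz0
      have hh1z : h1 z = 0 := (mul_eq_zero.1 hz0).resolve_right (hb0 z hzR)
      have hza : z ≠ a := by
        rintro rfl
        simp [h1] at hh1z
        exact hga hh1z
      have hhz : h z = 0 := by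
        simp only [h1, Function.update_of_ne hza, div_eq_zero_iff] at hh1z
        exact hh1z.resolve_right (pow_ne_zero _ (sub_ne_zero.2 hza))
      exact (Finset.mem_insert.1 (hz z hzR hhz)).resolve_left hza


theorem dim_kernel_bounds {R : ℝ} {w z : ℂ} (hw : w ∈ ball (0:ℂ) R) (hz : z ∈ sphere (0:ℂ) R) :
    (R - ‖w‖) / (R + ‖w‖) ≤ poissonKernel 0 w z ∧
      poissonKernel 0 w z ≤ (R + ‖w‖) / (R - ‖w‖) := by
  have h1 := le_re_herglotzRieszKernel hz hw
  have h2 := re_herglotzRieszKernel_le hz hw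
  have h3 : poissonKernel 0 w z = ((z - 0 + (w - 0)) / ((z - 0) - (w - 0))).re := by
    rw [poissonKernel_eq_re_herglotzRieszKernel]; rfl
  rw [h3]
  simp only [sub_zero] at h1 h2 ⊢
  exact ⟨h1, h2⟩

theorem dim_kernel_cont {R : ℝ} {w : ℂ} (hw : w ∈ ball (0:ℂ) R) :
    ContinuousOn (poissonKernel 0 w) (sphere (0:ℂ) R) := by
  have hR : 0 < R := lt_of_le_of_lt (norm_nonneg w) (by simpa using hw)
  have := continuousOn_herglotzRieszKernel_sphere hw
  rw [abs_of_pos hR] at this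
  rw [poissonKernel_eq_re_herglotzRieszKernel]
  exact Complex.continuous_re.comp_continuousOn this

theorem dim_log_cont {R : ℝ} {h : ℂ → ℂ} (hh : AnalyticOnNhd ℂ h (closedBall 0 R))
    (h0 : ∀ z ∈ sphere (0:ℂ) R, h z ≠ 0) :
    ContinuousOn (fun z => Real.log ‖h z‖) (sphere (0:ℂ) R) :=
  ContinuousOn.log (hh.continuousOn.mono sphere_subset_closedBall).norm
    (fun z hz => norm_ne_zero_iff.2 (h0 z hz))

theorem dim_poslog_cont {R : ℝ} {h : ℂ → ℂ} (hh : AnalyticOnNhd ℂ h (closedBall 0 R)) :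
    ContinuousOn (fun z => Real.posLog ‖h z‖) (sphere (0:ℂ) R) :=
  Real.continuous_posLog.comp_continuousOn (hh.continuousOn.mono sphere_subset_closedBall).norm

theorem dim_upper {R : ℝ} {h : ℂ → ℂ} (hh : AnalyticOnNhd ℂ h (closedBall 0 R))
    (hfin : {z ∈ closedBall (0:ℂ) R | h z = 0}.Finite)
    (h0 : ∀ z ∈ sphere (0:ℂ) R, h z ≠ 0) {w : ℂ} (hw : w ∈ ball (0:ℂ) R) :
    Real.posLog ‖h w‖ ≤ (R + ‖w‖) / (R - ‖w‖) *
      Real.circleAverage (fun z => Real.posLog ‖h z‖) 0 R := by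
  have hwR : ‖w‖ < R := by simpa using hw
  have hR : 0 < R := lt_of_le_of_lt (norm_nonneg w) hwR
  have hq : 0 ≤ (R + ‖w‖) / (R - ‖w‖) := div_nonneg (by positivity) (by linarith)
  have hnn : 0 ≤ (R + ‖w‖) / (R - ‖w‖) *
      Real.circleAverage (fun z => Real.posLog ‖h z‖) 0 R :=
    mul_nonneg hq (Real.circleAverage_nonneg_of_nonneg (fun _ _ => Real.posLog_nonneg))
  by_cases hw0 : h w = 0
  · simpa [hw0, Real.posLog] using hnn
  have hP := dim_poisson_le R hfin.toFinset (by
      intro a ha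
      have ha' := (hfin.mem_toFinset).1 ha
      have : ‖a‖ ≠ R := fun hc => h0 a (by simpa using hc) ha'.2
      have h1 : ‖a‖ ≤ R := by simpa using ha'.1
      simpa using lt_of_le_of_ne h1 this) h hh
    (fun z hz hz0 => (hfin.mem_toFinset).2 ⟨hz, hz0⟩) w hw hw0
  have hm : Real.circleAverage (poissonKernel 0 w • fun z => Real.log ‖h z‖) 0 R ≤
      Real.circleAverage (((R + ‖w‖) / (R - ‖w‖)) • fun z => Real.posLog ‖h z‖) 0 R := by
    apply Real.circleAverage_mono
    · apply ContinuousOn.circleIntegrable hR.le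
      exact (dim_kernel_cont hw).smul (dim_log_cont hh h0)
    · apply ContinuousOn.circleIntegrable hR.le
      exact (dim_poslog_cont hh).const_smul _
    · intro z hz
      rw [abs_of_pos hR] at hz
      obtain ⟨k1, k2⟩ := dim_kernel_bounds hw hz
      have k3 : 0 ≤ poissonKernel 0 w z :=
        le_trans (div_nonneg (by linarith) (by positivity)) k1
      have k4 : Real.log ‖h z‖ ≤ Real.posLog ‖h z‖ := by simp [Real.posLog]
      have k5 : 0 ≤ Real.posLog ‖h z‖ := Real.posLog_nonneg
      simp only [Pi.smul_apply', Pi.smul_apply, smul_eq_mul]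
      calc _ ≤ poissonKernel 0 w z * Real.posLog ‖h z‖ := by gcongr
        _ ≤ _ := by gcongr
  rw [Real.circleAverage_smul, smul_eq_mul] at hm
  rw [Real.posLog]
  exact max_le hnn (hP.trans hm)

theorem dim_lower {R : ℝ} {h : ℂ → ℂ} (hh : AnalyticOnNhd ℂ h (closedBall 0 R))
    (hfin : {z ∈ closedBall (0:ℂ) R | h z = 0}.Finite)
    (h0 : ∀ z ∈ sphere (0:ℂ) R, h z ≠ 0) (h1 : ∀ z ∈ sphere (0:ℂ) R, ‖h z‖ ≤ 1)
    {w : ℂ} (hw : w ∈ ball (0:ℂ) R) (hw0 : h w ≠ 0) :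
    Real.log ‖h w‖ ≤ (R - ‖w‖) / (R + ‖w‖) *
      Real.circleAverage (fun z => Real.log ‖h z‖) 0 R := by
  have hwR : ‖w‖ < R := by simpa using hw
  have hR : 0 < R := lt_of_le_of_lt (norm_nonneg w) hwR
  have hP := dim_poisson_le R hfin.toFinset (by
      intro a ha
      have ha' := (hfin.mem_toFinset).1 ha
      have : ‖a‖ ≠ R := fun hc => h0 a (by simpa using hc) ha'.2
      have h1 : ‖a‖ ≤ R := by simpa using ha'.1
      simpa using lt_of_le_of_ne h1 this) h hh
    (fun z hz hz0 => (hfin.mem_toFinset).2 ⟨hz, hz0⟩) w hw hw0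
  have hm : Real.circleAverage (poissonKernel 0 w • fun z => Real.log ‖h z‖) 0 R ≤
      Real.circleAverage (((R - ‖w‖) / (R + ‖w‖)) • fun z => Real.log ‖h z‖) 0 R := by
    apply Real.circleAverage_mono
    · apply ContinuousOn.circleIntegrable hR.le
      exact (dim_kernel_cont hw).smul (dim_log_cont hh h0)
    · apply ContinuousOn.circleIntegrable hR.le
      exact (dim_log_cont hh h0).const_smul _
    · intro z hz
      rw [abs_of_pos hR] at hz
      obtain ⟨k1, k2⟩ := dim_kernel_bounds hw hz
      have k4 : Real.log ‖h z‖ ≤ 0 := Real.log_nonpos (norm_nonneg _) (h1 z hz)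
      simp only [Pi.smul_apply', Pi.smul_apply, smul_eq_mul]
      exact mul_le_mul_of_nonpos_right k1 k4
  rw [Real.circleAverage_smul, smul_eq_mul] at hm
  exact hP.trans hm

/-- `p`-valence in the disk of radius three. -/
def DimVal (h : ℂ → ℂ) (p : ℕ) : Prop :=
  ∀ c : ℂ, ∀ s : Finset ℂ, (∀ t ∈ s, t ∈ ball (0:ℂ) 3 ∧ h t = c) → s.card ≤ p

theorem DimVal.div {h : ℂ → ℂ} {p : ℕ} (hv : DimVal h p) {m : ℂ} (hm : m ≠ 0) :
    DimVal (fun z => h z / m) p := by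
  intro c s hs
  refine hv (c * m) s (fun t ht => ⟨(hs t ht).1, ?_⟩)
  have := (hs t ht).2
  rw [← this]; field_simp

theorem DimVal.finite {h : ℂ → ℂ} {p : ℕ} (hv : DimVal h p) (c : ℂ) :
    {z ∈ ball (0:ℂ) 3 | h z = c}.Finite := by
  by_contra hinf
  obtain ⟨s, hs, hc⟩ := Set.Infinite.exists_subset_card_eq hinf (p + 1)
  have := hv c s (fun t ht => hs ht)
  omega

theorem dim_crit_finite {h : ℂ → ℂ} {p : ℕ} (hv : DimVal h p)
    (hh : AnalyticOnNhd ℂ h (ball 0 3)) {R : ℝ} (hR3 : R < 3) :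
    {z ∈ closedBall (0:ℂ) R | deriv h z = 0}.Finite := by
  by_contra hinf
  obtain ⟨x, hx, hacc⟩ := Set.Infinite.exists_accPt_of_subset_isCompact hinf
    (isCompact_closedBall (0:ℂ) R) (Set.sep_subset _ _)
  have hsub : closedBall (0:ℂ) R ⊆ ball 0 3 := closedBall_subset_ball hR3
  have hfr : ∃ᶠ z in nhdsWithin x {x}ᶜ, deriv h z = 0 :=
    (accPt_iff_frequently_nhdsNE.1 hacc).mono (fun z hz => hz.2)
  have hpre : IsPreconnected (ball (0:ℂ) 3) := (convex_ball 0 3).isPreconnected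
  have heq := hh.deriv.eqOn_zero_of_preconnected_of_frequently_eq_zero hpre (hsub hx) hfr
  obtain ⟨a, ha⟩ := isOpen_ball.exists_is_const_of_deriv_eq_zero hpre hh.differentiableOn heq
  have hb : (ball (0:ℂ) 3).Infinite :=
    infinite_of_mem_nhds 0 (ball_mem_nhds 0 (by norm_num))
  exact hb ((hv.finite a).subset (fun z hz => ⟨hz, ha z hz⟩))

theorem dim_jensen_le {h : ℂ → ℂ} {p : ℕ} (hv : DimVal h p)
    (hh : AnalyticOnNhd ℂ h (ball 0 3)) {R ρ : ℝ} (hR3 : R < 3) (hρ : 0 < ρ) (hρR : ρ ≤ R)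
    (hsmall : ∀ z ∈ ball (0:ℂ) ρ, ‖h z‖ ≤ 1 / 2) {a : ℂ} (ha : ‖a‖ = 1)
    (hcrit : ∀ z ∈ closedBall (0:ℂ) R, deriv h z = 0 → h z ≠ a) :
    Real.circleAverage (fun z => Real.log ‖h z - a‖) 0 R ≤
      Real.log 2 + p * Real.log (R / ρ) := by
  have hR : 0 < R := hρ.trans_le hρR
  have hsub : closedBall (0:ℂ) R ⊆ ball 0 3 := closedBall_subset_ball hR3
  have hne : ∀ z ∈ ball (0:ℂ) ρ, h z ≠ a := by
    intro z hz he
    have := hsmall z hz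
    rw [he, ha] at this; norm_num at this
  have han : AnalyticOnNhd ℂ (fun z => h z - a) (closedBall 0 R) :=
    fun z hz => (hh z (hsub hz)).sub analyticAt_const
  have h00 : h 0 - a ≠ 0 := sub_ne_zero.2 (hne 0 (mem_ball_self hρ))
  have hJ := AnalyticOnNhd.circleAverage_log_norm (c := 0) (R := R) (f := fun z => h z - a) hR.ne'
    (by rwa [abs_of_pos hR]) h00
  rw [abs_of_pos hR] at hJ
  rw [hJ]
  have hlast : Real.log ‖h 0 - a‖ ≤ Real.log 2 := by
    apply Real.log_le_log (norm_pos_iff.2 h00)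
    have := norm_sub_le (h 0) a
    have h2 := hsmall 0 (mem_ball_self hρ)
    linarith
  set D := MeromorphicOn.divisor (fun z => h z - a) (closedBall 0 R) with hD
  have hDfin : D.support.Finite := D.finiteSupport (isCompact_closedBall 0 R)
  have hDmem : ∀ u, D u ≠ 0 → u ∈ closedBall (0:ℂ) R ∧ h u = a ∧ D u = 1 := by
    intro u hu
    have hu1 : u ∈ closedBall (0:ℂ) R := D.supportWithinDomain hu
    have hval : D u = ((analyticOrderAt (fun z => h z - a) u).toNat : ℤ) := by
      have h1 := MeromorphicOn.AnalyticOnNhd.divisor_apply han hu1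
      rw [hD, h1]
      generalize analyticOrderAt (fun z => h z - a) u = o
      cases o with
      | top => rfl
      | coe n => rfl
    have hua : h u = a := by
      by_contra hc
      have := (han u hu1).analyticOrderAt_eq_zero.2 (sub_ne_zero.2 hc)
      rw [this] at hval
      exact hu (by simpa using hval)
    have hd : deriv h u ≠ 0 := fun hc => hcrit u hu1 hc hua
    have := (hh u (hsub hu1)).analyticOrderAt_sub_eq_one_of_deriv_ne_zero hd
    rw [hua] at this
    rw [this] at hval
    exact ⟨hu1, hua, by simpa using hval⟩
  have hsum : ∑ᶠ u, (D u : ℝ) * Real.log (R * ‖0 - u‖⁻¹) ≤ p * Real.log (R / ρ) := by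
    rw [finsum_eq_sum_of_support_subset (s := hDfin.toFinset)]
    · have hcard : hDfin.toFinset.card ≤ p := by
        apply hv a
        intro t ht
        obtain ⟨h1, h2, _⟩ := hDmem t (by simpa using ht)
        exact ⟨hsub h1, h2⟩
      have hlog : 0 ≤ Real.log (R / ρ) := Real.log_nonneg ((one_le_div hρ).2 hρR)
      calc _ ≤ ∑ u ∈ hDfin.toFinset, Real.log (R / ρ) := by
            apply Finset.sum_le_sum
            intro u hu
            obtain ⟨h1, h2, h3⟩ := hDmem u (by simpa using hu)
            have hu : ρ ≤ ‖u‖ := by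
              by_contra hc
              exact hne u (by simpa using hc) h2
            rw [h3, Int.cast_one, one_mul, zero_sub, norm_neg, div_eq_mul_inv]
            have : 0 < ‖u‖ := hρ.trans_le hu
            gcongr
        _ = hDfin.toFinset.card * Real.log (R / ρ) := by simp
        _ ≤ _ := by gcongr
    · intro u hu
      have : D u ≠ 0 := by
        intro hc; simp [hc] at hu
      simpa using this
  have h0' : Real.log ‖(fun z => h z - a) 0‖ = Real.log ‖h 0 - a‖ := rfl
  linarith

theorem dim_mean_le {h : ℂ → ℂ} {p : ℕ} (hv : DimVal h p)
    (hh : AnalyticOnNhd ℂ h (ball 0 3)) {R ρ : ℝ} (hR3 : R < 3) (hρ : 0 < ρ) (hρR : ρ ≤ R)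
    (hsmall : ∀ z ∈ ball (0:ℂ) ρ, ‖h z‖ ≤ 1 / 2) :
    Real.circleAverage (fun z => Real.posLog ‖h z‖) 0 R ≤
      Real.log 2 + p * Real.log (R / ρ) := by
  have hR : 0 < R := hρ.trans_le hρR
  have hsub : closedBall (0:ℂ) R ⊆ ball 0 3 := closedBall_subset_ball hR3
  have hmap : ∀ β, circleMap 0 R β ∈ ball (0:ℂ) 3 := fun β =>
    hsub (circleMap_mem_closedBall 0 hR.le β)
  have hF : Continuous (fun β => h (circleMap 0 R β)) :=
    hh.continuousOn.comp_continuous (continuous_circleMap 0 R) hmap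
  have := dim_cartan_le (fun β => h (circleMap 0 R β)) hF
    (2 * Real.pi * (Real.log 2 + p * Real.log (R / ρ)))
    (h '' {z ∈ closedBall (0:ℂ) R | deriv h z = 0})
    ((dim_crit_finite hv hh hR3).image h).countable (by
      intro a ha hS
      have := dim_jensen_le hv hh hR3 hρ hρR hsmall ha
        (fun z hz hd he => hS ⟨z, ⟨hz, hd⟩, he⟩)
      rw [Real.circleAverage_def, smul_eq_mul, inv_mul_le_iff₀ Real.two_pi_pos] at this
      exact this)
  rw [Real.circleAverage_def, smul_eq_mul, inv_mul_le_iff₀ Real.two_pi_pos]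
  exact this


theorem dim_exists_radius {S : Set ℝ} (hS : S.Finite) {a b : ℝ} (hab : a < b) :
    ∃ R, a < R ∧ R < b ∧ R ∉ S := by
  obtain ⟨R, h1, h2⟩ := ((Set.Ioo_infinite hab).diff hS).nonempty
  exact ⟨R, h1.1, h1.2, h2⟩

/-- The logarithm of the constant. -/
def dimC (p : ℕ) : ℝ :=
  5 * Real.log 2 + p * Real.log 3 + 54 * (Real.log 2 + p * Real.log 3)

theorem dim_one_var {h : ℂ → ℂ} {p : ℕ} (hv : DimVal h p)
    (hh : AnalyticOnNhd ℂ h (ball 0 3)) {ρ M : ℝ} (hρ : 0 < ρ) (hρ1 : ρ ≤ 1) (hM : 0 < M)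
    (hb : ∀ z ∈ ball (0:ℂ) ρ, ‖h z‖ ≤ M) {z : ℂ} (hz : ‖z‖ ≤ 2) :
    ‖h z‖ ≤ Real.exp (dimC p) / ρ ^ p * M := by
  have hsub : ∀ {R : ℝ}, R < 3 → closedBall (0:ℂ) R ⊆ ball 0 3 :=
    fun hR => closedBall_subset_ball hR
  have hZfin := hv.finite 0
  have hNfin := hZfin.image (fun z => ‖z‖)
  have hzero : ∀ {R : ℝ}, R < 3 → R ∉ (fun z : ℂ => ‖z‖) '' {z ∈ ball (0:ℂ) 3 | h z = 0} →
      ∀ z ∈ sphere (0:ℂ) R, h z ≠ 0 := by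
    intro R hR hn z hz h0
    exact hn ⟨z, ⟨hsub hR (sphere_subset_closedBall hz), h0⟩, by simpa using hz⟩
  have hdivzero : ∀ {R : ℝ} (m : ℂ), m ≠ 0 → R < 3 →
      {z ∈ closedBall (0:ℂ) R | h z / m = 0}.Finite := by
    intro R m hm hR
    refine hZfin.subset (fun z hz => ⟨hsub hR hz.1, ?_⟩)
    exact (div_eq_zero_iff.1 hz.2).resolve_right hm
  have hdivan : ∀ {R : ℝ} (m : ℂ), R < 3 →
      AnalyticOnNhd ℂ (fun z => h z / m) (closedBall 0 R) := by
    intro R m hR z hz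
    have := hh z (hsub hR hz)
    simp only [div_eq_mul_inv]
    exact this.mul analyticAt_const
  have hdivan3 : ∀ (m : ℂ), AnalyticOnNhd ℂ (fun z => h z / m) (ball 0 3) := by
    intro m z hz
    have := hh z hz
    simp only [div_eq_mul_inv]
    exact this.mul analyticAt_const
  obtain ⟨R1, hR1a, hR1b, hR1⟩ := dim_exists_radius hNfin (a := 2.8) (b := 2.9) (by norm_num)
  obtain ⟨R2, hR2a, hR2b, hR2⟩ := dim_exists_radius hNfin (a := 2.2) (b := 2.5) (by norm_num)
  have hR13 : R1 < 3 := by linarith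
  have hR23 : R2 < 3 := by linarith
  -- the maximum over the closed unit disk
  obtain ⟨t0, ht0, hmax⟩ := (isCompact_closedBall (0:ℂ) 1).exists_isMaxOn ⟨0, by simp⟩
    ((hh.continuousOn.mono (hsub (by norm_num : (1:ℝ) < 3))).norm)
  have ht0' : ‖t0‖ ≤ 1 := by simpa using ht0
  have hM1 : h t0 ≠ 0 := by
    intro h0
    have hinf : (ball (0:ℂ) 1).Infinite :=
      infinite_of_mem_nhds 0 (ball_mem_nhds 0 (by norm_num))
    refine hinf (hZfin.subset (fun z hz => ⟨ball_subset_ball (by norm_num) hz, ?_⟩))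
    have := hmax (ball_subset_closedBall hz)
    simp only [mem_setOf_eq, h0, norm_zero] at this
    exact norm_le_zero_iff.1 this
  set M1 := ‖h t0‖ with hM1d
  have hM1p : 0 < M1 := norm_pos_iff.2 hM1
  set A := Real.log 2 + p * Real.log 3 with hA
  have hl2 : 0 ≤ Real.log 2 := Real.log_nonneg (by norm_num)
  have hl3 : 0 ≤ Real.log 3 := Real.log_nonneg (by norm_num)
  have hA0 : 0 ≤ A := by positivity
  have hm1 : ((2 * M1 : ℝ) : ℂ) ≠ 0 := by exact_mod_cast (by positivity : (2 * M1) ≠ 0)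
  -- step 1
  have step1 := dim_mean_le (hv.div hm1) (hdivan3 _) hR13 one_pos (by linarith : (1:ℝ) ≤ R1) (by
    intro z hz
    have : ‖h z‖ ≤ M1 := hmax (ball_subset_closedBall hz)
    rw [norm_div, Complex.norm_real, Real.norm_of_nonneg (by positivity), div_le_iff₀ (by positivity)]
    linarith)
  have step1' : Real.circleAverage (fun z => Real.posLog ‖h z / ((2 * M1 : ℝ) : ℂ)‖) 0 R1 ≤ A := by
    refine step1.trans ?_
    rw [hA, div_one]
    have : Real.log R1 ≤ Real.log 3 := Real.log_le_log (by linarith) hR13.le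
    gcongr
  set M2 := 2 * M1 * Real.exp (18 * A) with hM2
  have hM2p : 0 < M2 := by positivity
  have hbig : ∀ w : ℂ, ‖w‖ ≤ 2.5 → ‖h w‖ ≤ M2 := by
    intro w hw
    have hwb : w ∈ ball (0:ℂ) R1 := by simp; linarith
    have h1 := dim_upper (hdivan _ hR13) (hdivzero _ hm1 hR13)
      (fun z hz => div_ne_zero (hzero hR13 hR1 z hz) hm1) hwb
    have h2 : (R1 + ‖w‖) / (R1 - ‖w‖) ≤ 18 := by
      rw [div_le_iff₀ (by linarith)]; linarith
    have h3 : Real.posLog ‖h w / ((2 * M1 : ℝ) : ℂ)‖ ≤ 18 * A := by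
      refine h1.trans ?_
      have h4 : 0 ≤ Real.circleAverage (fun z => Real.posLog ‖h z / ((2 * M1 : ℝ) : ℂ)‖) 0 R1 :=
        Real.circleAverage_nonneg_of_nonneg (fun _ _ => Real.posLog_nonneg)
      calc _ ≤ 18 * Real.circleAverage (fun z => Real.posLog ‖h z / ((2 * M1 : ℝ) : ℂ)‖) 0 R1 := by
            gcongr
        _ ≤ _ := by gcongr
    by_cases hw0 : h w = 0
    · rw [hw0, norm_zero]; exact hM2p.le
    have h5 : Real.log ‖h w / ((2 * M1 : ℝ) : ℂ)‖ ≤ 18 * A :=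
      le_trans (by simp [Real.posLog]) h3
    rw [Real.log_le_iff_le_exp (norm_pos_iff.2 (div_ne_zero hw0 hm1)), norm_div,
      Complex.norm_real, Real.norm_of_nonneg (by positivity), div_le_iff₀ (by positivity)] at h5
    rw [hM2]; linarith
  -- step 2
  have hm2 : ((M2 : ℝ) : ℂ) ≠ 0 := by exact_mod_cast hM2p.ne'
  have hlogdiv : ∀ {m : ℝ}, 0 < m → ∀ z, h z ≠ 0 →
      Real.log ‖h z / (m : ℂ)‖ = Real.log ‖h z‖ - Real.log m := by
    intro m hm z hz
    rw [norm_div, Complex.norm_real, Real.norm_of_nonneg hm.le,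
      Real.log_div (norm_ne_zero_iff.2 hz) hm.ne']
  have step2 := dim_lower (hdivan _ hR23) (hdivzero _ hm2 hR23)
      (fun z hz => div_ne_zero (hzero hR23 hR2 z hz) hm2) (by
        intro z hz
        have hz' : ‖z‖ = R2 := by simpa using hz
        rw [norm_div, Complex.norm_real, Real.norm_of_nonneg hM2p.le]
        exact (div_le_one hM2p).2 (hbig z (by linarith)))
      (w := t0) (by simp; linarith) (div_ne_zero hM1 hm2)
  have havg : ∀ {m : ℝ}, 0 < m → Real.circleAverage (fun z => Real.log ‖h z / (m : ℂ)‖) 0 R2 =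
      Real.circleAverage (fun z => Real.log ‖h z‖) 0 R2 - Real.log m := by
    intro m hm
    rw [← Real.circleAverage_const (Real.log m) 0 R2, ← Real.circleAverage_fun_sub]
    · apply Real.circleAverage_congr_sphere
      intro z hz
      rw [abs_of_pos (by linarith)] at hz
      simp only
      exact hlogdiv hm z (hzero hR23 hR2 z hz)
    · apply ContinuousOn.circleIntegrable (by linarith)
      exact dim_log_cont (fun z hz => hh z (hsub hR23 hz)) (hzero hR23 hR2)
    · exact circleIntegrable_const _ _ _
  rw [havg hM2p, hlogdiv hM2p t0 hM1] at step2
  set m := Real.circleAverage (fun z => Real.log ‖h z‖) 0 R2 with hmdef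
  have hlogM2 : Real.log M2 = Real.log 2 + Real.log M1 + 18 * A := by
    rw [hM2, Real.log_mul (by positivity) (by positivity), Real.log_mul (by norm_num) hM1p.ne',
      Real.log_exp]
  have hq : (1:ℝ) / 3 ≤ (R2 - ‖t0‖) / (R2 + ‖t0‖) := by
    have := norm_nonneg t0
    rw [le_div_iff₀ (by linarith)]; linarith
  have step2' : Real.log M2 - 3 * (Real.log 2 + 18 * A) ≤ m := by
    have hq0 := hq
    set q := (R2 - ‖t0‖) / (R2 + ‖t0‖)
    have e : Real.log M1 - Real.log M2 = -(Real.log 2 + 18 * A) := by rw [hlogM2]; ring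
    rw [← hM1d, e] at step2
    by_contra hc
    push Not at hc
    nlinarith
  -- step 3
  have hm3 : ((2 * M : ℝ) : ℂ) ≠ 0 := by exact_mod_cast (by positivity : (2 * M) ≠ 0)
  have step3 := dim_mean_le (hv.div hm3) (hdivan3 _) hR23 hρ (by linarith : ρ ≤ R2) (by
    intro z hz
    have := hb z hz
    rw [norm_div, Complex.norm_real, Real.norm_of_nonneg (by positivity), div_le_iff₀ (by positivity)]
    linarith)
  have step3a : m - Real.log (2 * M) ≤
      Real.circleAverage (fun z => Real.posLog ‖h z / ((2 * M : ℝ) : ℂ)‖) 0 R2 := by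
    rw [hmdef, ← havg (by positivity : 0 < 2 * M)]
    apply Real.circleAverage_mono
    · apply ContinuousOn.circleIntegrable (by linarith)
      exact dim_log_cont (hdivan _ hR23) (fun z hz => div_ne_zero (hzero hR23 hR2 z hz) hm3)
    · apply ContinuousOn.circleIntegrable (by linarith)
      exact dim_poslog_cont (hdivan _ hR23)
    · intro z _
      simp [Real.posLog]
  have hlogR : Real.log (R2 / ρ) ≤ Real.log 3 - Real.log ρ := by
    rw [Real.log_div (by linarith) hρ.ne']
    have : Real.log R2 ≤ Real.log 3 := Real.log_le_log (by linarith) hR23.le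
    linarith
  have hplog : p * Real.log (R2 / ρ) ≤ p * (Real.log 3 - Real.log ρ) := by gcongr
  have hl2M : Real.log (2 * M) = Real.log 2 + Real.log M := Real.log_mul (by norm_num) hM.ne'
  have hfin : Real.log M2 ≤ Real.log (Real.exp (dimC p) / ρ ^ p * M) := by
    rw [Real.log_mul (by positivity) hM.ne', Real.log_div (by positivity) (by positivity),
      Real.log_exp, Real.log_pow, dimC]
    rw [hA] at step2'
    nlinarith
  have hres : M2 ≤ Real.exp (dimC p) / ρ ^ p * M :=
    (Real.log_le_log_iff hM2p (by positivity)).1 hfin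
  exact (hbig z (by linarith)).trans hres

theorem dim_chart {n p : ℕ} {g : EuclideanSpace ℂ (Fin n) → ℂ}
    (hg : AnalyticOnNhd ℂ g (ball 0 4)) (hv : SectionallyPValentOn g (ball 0 4) p)
    {c : EuclideanSpace ℂ (Fin n)} {ρ M : ℝ} (hρ : 0 < ρ) (hρ1 : ρ ≤ 1) (hM : 0 < M)
    (hc : c ∈ ball (0 : EuclideanSpace ℂ (Fin n)) 1)
    (hb : ∀ x ∈ ball c ρ, ‖g x‖ ≤ M) {x : EuclideanSpace ℂ (Fin n)}
    (hx : x ∈ ball (0 : EuclideanSpace ℂ (Fin n)) 1) :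
    ‖g x‖ ≤ Real.exp (dimC p) / ρ ^ p * M := by
  have hC0 : 0 ≤ dimC p := by
    have hl2 : 0 ≤ Real.log 2 := Real.log_nonneg (by norm_num)
    have hl3 : 0 ≤ Real.log 3 := Real.log_nonneg (by norm_num)
    rw [dimC]; positivity
  by_cases hxc : x = c
  · have h1 : ‖g x‖ ≤ M := hb x (by rw [hxc]; exact mem_ball_self hρ)
    have h2 : 1 ≤ Real.exp (dimC p) / ρ ^ p := by
      rw [one_le_div (by positivity)]
      exact (pow_le_one₀ hρ.le hρ1).trans (Real.one_le_exp hC0)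
    nlinarith
  have hc' : ‖c‖ < 1 := by simpa using hc
  have hx' : ‖x‖ < 1 := by simpa using hx
  have hd : 0 < ‖x - c‖ := norm_pos_iff.2 (sub_ne_zero.2 hxc)
  set b : EuclideanSpace ℂ (Fin n) := ((‖x - c‖⁻¹ : ℝ) : ℂ) • (x - c) with hbdef
  have hbn : ‖b‖ = 1 := by
    rw [hbdef, norm_smul, Complex.norm_real, Real.norm_of_nonneg (by positivity)]
    field_simp
  have hb0 : b ≠ 0 := by rintro h; rw [h] at hbn; simp at hbn
  have hmem : ∀ t ∈ ball (0:ℂ) 3, c + t • b ∈ ball (0 : EuclideanSpace ℂ (Fin n)) 4 := by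
    intro t ht
    have ht' : ‖t‖ < 3 := by simpa using ht
    have := norm_add_le c (t • b)
    rw [norm_smul, hbn] at this
    simp only [mem_ball, dist_zero_right]
    linarith
  have hval : DimVal (fun t => g (c + t • b)) p := by
    intro v s hs
    exact hv c b hb0 v s (fun t ht => ⟨hmem t (hs t ht).1, (hs t ht).2⟩)
  have han : AnalyticOnNhd ℂ (fun t : ℂ => g (c + t • b)) (ball 0 3) := by
    intro t ht
    have h1 : AnalyticAt ℂ (fun t : ℂ => c + t • b) t := by fun_prop
    exact AnalyticAt.comp' (f := fun t : ℂ => c + t • b) (hg _ (hmem t ht)) h1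
  have key := dim_one_var hval han hρ hρ1 hM (by
    intro t ht
    apply hb
    have ht' : ‖t‖ < ρ := by simpa using ht
    simp [norm_smul, hbn, ht']) (z := ((‖x - c‖ : ℝ) : ℂ)) (by
      rw [Complex.norm_real, Real.norm_of_nonneg (norm_nonneg _)]
      have := norm_sub_le x c
      linarith)
  have hxe : c + ((‖x - c‖ : ℝ) : ℂ) • b = x := by
    rw [hbdef, smul_smul, ← Complex.ofReal_mul, mul_inv_cancel₀ hd.ne']
    simp
  simp only [hxe] at key
  exact key

theorem dim_step {n N p : ℕ} {G Y : Set (EuclideanSpace ℂ (Fin N))}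
    (U : DoublingCovering n N G Y) {f : EuclideanSpace ℂ (Fin N) → ℂ}
    (hf : ∀ j, AnalyticOnNhd ℂ (f ∘ U.psi j) (ball (0 : EuclideanSpace ℂ (Fin n)) 4))
    (hv : ∀ j, SectionallyPValentOn (f ∘ U.psi j) (ball (0 : EuclideanSpace ℂ (Fin n)) 4) p)
    {ρ M : ℝ} (hρ : 0 < ρ) (hρ1 : ρ ≤ 1) (hM : 0 ≤ M) {j : Fin U.kappa}
    {T : Set (EuclideanSpace ℂ (Fin N))} (hT : U.RadGe j T ρ) (hb : ∀ v ∈ T, ‖f v‖ ≤ M) :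
    ∀ v ∈ U.chart j, ‖f v‖ ≤ Real.exp (dimC p) / ρ ^ p * M := by
  rintro v ⟨x, hx, rfl⟩
  obtain ⟨c, hc⟩ := hT
  have hK : 0 < Real.exp (dimC p) / ρ ^ p := by positivity
  have hcm := hc (mem_ball_self hρ)
  apply le_of_forall_pos_le_add
  intro ε hε
  have := dim_chart (hf j) (hv j) hρ hρ1
    (by positivity : 0 < M + ε / (Real.exp (dimC p) / ρ ^ p)) hcm.1 (by
      intro y hy
      have h1 : ‖f (U.psi j y)‖ ≤ M := hb _ (hc hy).2.2
      have h2 : 0 < ε / (Real.exp (dimC p) / ρ ^ p) := by positivity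
      simp only [Function.comp]
      linarith) hx
  rw [mul_add, mul_div_cancel₀ _ hK.ne'] at this
  exact this



/-- Simple form of the doubling inequality on a complex manifold covered by a doubling
covering: for every `p ≥ 1` there is `c_p ≥ 1` such that if `f` is analytic and sectionally
`p`-valent in all the charts of a doubling covering `𝒰` of `G`, `Ω ⊆ G` is compact,
`0 < ρ ≤ 1`, and every point of `G` is reached from `Ω` by a chain of at most
`ℓ(𝒰) ≤ κ(𝒰)` charts with all the relevant radii at least `ρ`, then
`sup_G |f| ≤ (c_p/ρ^p)^{ℓ(𝒰)} sup_Ω |f| ≤ (c_p/ρ^p)^{κ(𝒰)} sup_Ω |f|`. -/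
theorem doubling_inequality_on_manifold (p : ℕ) (hp : 1 ≤ p) :
    ∃ c : ℝ, 1 ≤ c ∧
      ∀ (n N : ℕ) (G Y : Set (EuclideanSpace ℂ (Fin N)))
        (U : DoublingCovering n N G Y), IsCompact G →
      ∀ f : EuclideanSpace ℂ (Fin N) → ℂ,
        (∀ j, AnalyticOnNhd ℂ (f ∘ U.psi j) (ball (0 : EuclideanSpace ℂ (Fin n)) 4)) →
        (∀ j, SectionallyPValentOn (f ∘ U.psi j) (ball (0 : EuclideanSpace ℂ (Fin n)) 4) p) →
      ∀ Ω : Set (EuclideanSpace ℂ (Fin N)), IsCompact Ω → Ω ⊆ G →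
      ∀ ρ : ℝ, 0 < ρ → ρ ≤ 1 →
      ∀ L : ℕ, 1 ≤ L → L ≤ U.kappa →
        (∀ z ∈ G, U.ChainFrom Ω ρ L z) →
        sSup ((fun v => ‖f v‖) '' G) ≤ (c / ρ ^ p) ^ L * sSup ((fun v => ‖f v‖) '' Ω) ∧
        (c / ρ ^ p) ^ L * sSup ((fun v => ‖f v‖) '' Ω) ≤
          (c / ρ ^ p) ^ U.kappa * sSup ((fun v => ‖f v‖) '' Ω) := by
  refine ⟨Real.exp (dimC p), ?_, ?_⟩
  · have hl2 : 0 ≤ Real.log 2 := Real.log_nonneg (by norm_num)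
    have hl3 : 0 ≤ Real.log 3 := Real.log_nonneg (by norm_num)
    apply Real.one_le_exp
    rw [dimC]; positivity
  intro n N G Y U hG f hf hv Ω hΩ hΩG ρ hρ hρ1 L hL hLk hchain
  set K := Real.exp (dimC p) / ρ ^ p with hK
  have hK1 : 1 ≤ K := by
    have hl2 : 0 ≤ Real.log 2 := Real.log_nonneg (by norm_num)
    have hl3 : 0 ≤ Real.log 3 := Real.log_nonneg (by norm_num)
    have hC0 : 0 ≤ dimC p := by rw [dimC]; positivity
    rw [hK, one_le_div (by positivity)]
    exact (pow_le_one₀ hρ.le hρ1).trans (Real.one_le_exp hC0)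
  set S := sSup ((fun v => ‖f v‖) '' Ω) with hS
  have hS0 : 0 ≤ S := Real.sSup_nonneg (by rintro _ ⟨v, _, rfl⟩; exact norm_nonneg _)
  -- boundedness
  have hbdd : BddAbove ((fun v => ‖f v‖) '' G) := by
    have hD : ∀ j, ∃ D, ∀ x ∈ closedBall (0 : EuclideanSpace ℂ (Fin n)) 1,
        ‖(f ∘ U.psi j) x‖ ≤ D := fun j =>
      (isCompact_closedBall _ _).exists_bound_of_continuousOn
        ((hf j).continuousOn.mono (closedBall_subset_ball (by norm_num)))
    choose D hD using hD
    refine ⟨∑ j, |D j|, ?_⟩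
    rintro _ ⟨v, hvG, rfl⟩
    obtain ⟨j, x, hx, rfl⟩ := mem_iUnion.1 (U.covers hvG)
    have h1 := hD j x (ball_subset_closedBall hx)
    have h2 : |D j| ≤ ∑ j, |D j| :=
      Finset.single_le_sum (f := fun j => |D j|) (fun i _ => abs_nonneg _) (Finset.mem_univ j)
    exact (h1.trans (le_abs_self _)).trans h2
  have hΩb : ∀ v ∈ Ω, ‖f v‖ ≤ S := fun v hvΩ =>
    le_csSup (hbdd.mono (image_mono hΩG)) ⟨v, hvΩ, rfl⟩
  refine ⟨?_, ?_⟩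
  · apply Real.sSup_le
    · rintro _ ⟨z, hz, rfl⟩
      obtain ⟨l, hl, js, hlL, -, hfirst, hcons, hlast⟩ := hchain z hz
      have hind : ∀ m : ℕ, (hm : m < l) → ∀ v ∈ U.chart (js ⟨m, hm⟩), ‖f v‖ ≤ K ^ (m + 1) * S := by
        intro m
        induction m with
        | zero =>
          intro hm v hvc
          have := dim_step U hf hv hρ hρ1 hS0 hfirst hΩb v hvc
          simpa using this
        | succ m ih =>
          intro hm v hvc
          have := dim_step U hf hv hρ hρ1 (by positivity) (hcons m hm).2 (ih (by omega)) v hvc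
          rw [pow_succ' K (m + 1), mul_assoc]
          exact this
      have h1 := hind (l - 1) (by omega) z hlast
      have h2 : K ^ (l - 1 + 1) ≤ K ^ L := pow_le_pow_right₀ hK1 (by omega)
      exact h1.trans (mul_le_mul_of_nonneg_right h2 hS0)
    · positivity
  · exact mul_le_mul_of_nonneg_right (pow_le_pow_right₀ hK1 hLk) hS0
end
end

section
/- For every positive integer p there exists a constant c_p ≥ 1, depending only on p, with the following property. Let 𝒰, f, G, Ω, ρ and ℓ(𝒰) ≤ κ(𝒰) be as follows: 𝒰 is a doubling covering of the compact set G ⊆ Y ⊆ ℂ^N; f : Y → ℂ is such that f ∘ ψ̃_j is analytic and sectionally p-valent on B₄ for every chart; Ω ⊆ G is compact; 0 < ρ ≤ 1; every point z ∈ G is contained in the last chart of some chain of at most ℓ(𝒰) charts of 𝒰 whose first chart U_{j₁} satisfies ρ(U_{j₁}, Ω) ≥ ρ and whose consecutive intersection radii are at least ρ. Assume moreover that c_p/ρ^p > 1 and sup_Ω |f| > 0. Then κ(𝒰) ≥ log( sup_G |f| / sup_Ω |f| ) / log( c_p / ρ^p ). -/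
open Metric Set

noncomputable section

open MeasureTheory in
lemma aux_osc {φ φ' : ℝ → ℝ} (hφ : ∀ x, HasDerivAt φ (φ' x) x) (hφ' : Continuous φ')
    {A B x0 y0 : ℝ} (hAB : A < B) (hx0 : x0 ∈ Icc (-Real.pi) Real.pi)
    (hy0 : y0 ∈ Icc (-Real.pi) Real.pi) (hxA : φ x0 ≤ A) (hyB : B ≤ φ y0) :
    ENNReal.ofReal ((B - A) ^ 2 / (2 * Real.pi)) ≤
      ∫⁻ θ in Ioo (-Real.pi) Real.pi, {θ | A ≤ φ θ ∧ φ θ ≤ B}.indicator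
        (fun θ => ENNReal.ofReal (φ' θ ^ 2)) θ := by
  have hc : Continuous φ := continuous_iff_continuousAt.2 fun x => (hφ x).continuousAt
  set K : Set (ℝ × ℝ) := (Icc (-Real.pi) Real.pi ×ˢ Icc (-Real.pi) Real.pi) ∩
    {q | φ q.1 ≤ A ∧ B ≤ φ q.2} with hK
  have hKc : IsCompact K := by
    refine (isCompact_Icc.prod isCompact_Icc).inter_right ?_
    exact (isClosed_le (f := fun q : ℝ × ℝ => φ q.1) (g := fun _ => A)
      (by fun_prop) (by fun_prop)).inter (isClosed_le (f := fun _ : ℝ × ℝ => B)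
      (g := fun q => φ q.2) (by fun_prop) (by fun_prop))
  obtain ⟨⟨x, y⟩, hxy, hmin⟩ := hKc.exists_isMinOn ⟨(x0, y0), ⟨⟨hx0, hy0⟩, ⟨hxA, hyB⟩⟩⟩
    (f := fun q => |q.1 - q.2|) (by fun_prop)
  obtain ⟨⟨hx, hy⟩, hxA, hyB⟩ := hxy
  simp only at hx hy hxA hyB
  have hmem : ∀ t ∈ Ioo (min x y) (max x y), t ∈ Ioo (-Real.pi) Real.pi ∧ A ≤ φ t ∧ φ t ≤ B := by
    intro t ht
    have ht1 : t ∈ Ioo (-Real.pi) Real.pi :=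
      ⟨lt_of_le_of_lt (le_min hx.1 hy.1) ht.1, lt_of_lt_of_le ht.2 (max_le hx.2 hy.2)⟩
    refine ⟨ht1, ?_, ?_⟩
    · by_contra! h
      have h2 := hmin (show (t, y) ∈ K from ⟨⟨⟨ht1.1.le, ht1.2.le⟩, hy⟩, h.le, hyB⟩)
      simp only [mem_ofPred_eq] at h2
      rcases le_total x y with hh | hh
      · rw [min_eq_left hh, max_eq_right hh] at ht
        rw [abs_of_nonpos (by linarith), abs_of_nonpos (by linarith [ht.2])] at h2
        linarith [ht.1]
      · rw [min_eq_right hh, max_eq_left hh] at ht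
        rw [abs_of_nonneg (by linarith), abs_of_nonneg (by linarith [ht.1])] at h2
        linarith [ht.2]
    · by_contra! h
      have h2 := hmin (show (x, t) ∈ K from ⟨⟨hx, ⟨ht1.1.le, ht1.2.le⟩⟩, hxA, h.le⟩)
      simp only [mem_ofPred_eq] at h2
      rcases le_total x y with hh | hh
      · rw [min_eq_left hh, max_eq_right hh] at ht
        rw [abs_of_nonpos (by linarith), abs_of_nonpos (by linarith [ht.1])] at h2
        linarith [ht.2]
      · rw [min_eq_right hh, max_eq_left hh] at ht
        rw [abs_of_nonneg (by linarith), abs_of_nonneg (by linarith [ht.2])] at h2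
        linarith [ht.1]
  set u := min x y with hu
  set v := max x y with hv
  have huv : u ≤ v := min_le_max
  have hIntg : ∀ f : ℝ → ℝ, Continuous f → IntervalIntegrable f volume u v := fun f hf =>
    hf.intervalIntegrable _ _
  have h1 : B - A ≤ |∫ t in u..v, φ' t| := by
    rw [intervalIntegral.integral_eq_sub_of_hasDerivAt (fun t _ => hφ t) (hIntg _ hφ')]
    rcases le_total x y with hh | hh
    · rw [hu, hv, min_eq_left hh, max_eq_right hh]
      exact le_trans (by linarith) (le_abs_self _)
    · rw [hu, hv, min_eq_right hh, max_eq_left hh]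
      exact le_trans (by linarith) (neg_le_abs _)
  have h2 : |∫ t in u..v, φ' t| ≤ ∫ t in u..v, |φ' t| :=
    intervalIntegral.abs_integral_le_integral_abs huv
  set lam := (B - A) / (2 * Real.pi) with hlam
  have hpi := Real.pi_pos
  have hlp : 0 < lam := div_pos (by linarith) (by linarith)
  have h3 : ∫ t in u..v, 2 * lam * |φ' t| ≤ ∫ t in u..v, (φ' t ^ 2 + lam ^ 2) := by
    refine intervalIntegral.integral_mono_on huv (hIntg _ (by fun_prop)) (hIntg _ (by fun_prop)) ?_
    intro t _
    nlinarith [sq_nonneg (|φ' t| - lam), sq_abs (φ' t)]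
  rw [intervalIntegral.integral_const_mul, intervalIntegral.integral_add
    (hIntg _ (by fun_prop)) (hIntg _ (by fun_prop)), intervalIntegral.integral_const] at h3
  have hvu : v - u ≤ 2 * Real.pi := by
    have := max_le hx.2 hy.2
    have := le_min hx.1 hy.1
    linarith
  have hBA : B - A = lam * (2 * Real.pi) := by rw [hlam]; field_simp
  have h4 : (B - A) ^ 2 / (2 * Real.pi) ≤ ∫ t in u..v, φ' t ^ 2 := by
    have e : (B - A) ^ 2 / (2 * Real.pi) = lam ^ 2 * (2 * Real.pi) := by
      rw [hBA]; field_simp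
    rw [e]
    have h5 : lam * (2 * Real.pi) ≤ ∫ t in u..v, |φ' t| := by linarith
    have h6 : (v - u) • lam ^ 2 ≤ 2 * Real.pi * lam ^ 2 := by
      rw [smul_eq_mul]; exact mul_le_mul_of_nonneg_right hvu (sq_nonneg _)
    nlinarith [mul_le_mul_of_nonneg_left h5 hlp.le]
  calc ENNReal.ofReal ((B - A) ^ 2 / (2 * Real.pi))
      ≤ ENNReal.ofReal (∫ t in u..v, φ' t ^ 2) := ENNReal.ofReal_le_ofReal h4
    _ = ∫⁻ t in Ioo u v, ENNReal.ofReal (φ' t ^ 2) := by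
        rw [intervalIntegral.integral_of_le huv, integral_Ioc_eq_integral_Ioo,
          ofReal_integral_eq_lintegral_ofReal]
        · exact ((hIntg _ (hφ'.pow 2)).1).mono_set Ioo_subset_Ioc_self
        · exact Filter.Eventually.of_forall fun t => sq_nonneg _
    _ = ∫⁻ t in Ioo u v, {θ | A ≤ φ θ ∧ φ θ ≤ B}.indicator
          (fun θ => ENNReal.ofReal (φ' θ ^ 2)) t := by
        refine setLIntegral_congr_fun measurableSet_Ioo fun t ht => ?_
        rw [indicator_of_mem]
        exact (hmem t ht).2
    _ ≤ _ := lintegral_mono_set fun t ht => (hmem t ht).1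

def auxPhi (a b : ℝ) : ℂ → ENNReal :=
  {w : ℂ | a ≤ ‖w‖ ∧ ‖w‖ ≤ b}.indicator fun w => ENNReal.ofReal ((‖w‖ ^ 2)⁻¹)

lemma auxPhi_meas (a b : ℝ) : Measurable (auxPhi a b) := by
  refine Measurable.indicator (by fun_prop) ?_
  exact (measurableSet_le measurable_const measurable_norm).inter
    (measurableSet_le measurable_norm measurable_const)

open MeasureTheory in
lemma auxPhi_int {a b : ℝ} (ha : 0 < a) (hab : a < b) :
    ∫⁻ w, auxPhi a b w ≤ ENNReal.ofReal (2 * Real.pi * Real.log (b / a)) := by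
  have hpi := Real.pi_pos
  rw [← Complex.lintegral_comp_polarCoord_symm]
  have h1 : ∀ q ∈ polarCoord.target, ENNReal.ofReal q.1 • auxPhi a b (Complex.polarCoord.symm q)
      = (Icc a b).indicator (fun r => ENNReal.ofReal r⁻¹) q.1 := by
    intro q hq
    have hq1 : 0 < q.1 := by
      simp only [polarCoord_target] at hq
      exact hq.1
    have hn : ‖Complex.polarCoord.symm q‖ = q.1 := by
      rw [Complex.norm_polarCoord_symm, abs_of_pos hq1]
    unfold auxPhi indicator
    simp only [mem_ofPred_eq, hn, mem_Icc, smul_eq_mul]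
    split_ifs
    · rw [← ENNReal.ofReal_mul hq1.le]
      congr 1
      field_simp
    · simp
  have hm : MeasurableSet polarCoord.target := polarCoord.open_target.measurableSet
  rw [setLIntegral_congr_fun hm h1, polarCoord_target, Measure.volume_eq_prod,
    ← Measure.prod_restrict]
  refine (lintegral_prod_le _).trans ?_
  simp only [lintegral_const, Measure.restrict_apply_univ, Real.volume_Ioo]
  have hmi : Measurable ((Icc a b).indicator (fun r : ℝ => ENNReal.ofReal r⁻¹)) :=
    Measurable.indicator (by fun_prop) measurableSet_Icc
  rw [lintegral_mul_const _ hmi]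
  calc _ ≤ (∫⁻ r, (Icc a b).indicator (fun r => ENNReal.ofReal r⁻¹) r) *
        ENNReal.ofReal (Real.pi - -Real.pi) := by
        gcongr
        exact Measure.restrict_le_self
    _ = ENNReal.ofReal (Real.log (b / a)) * ENNReal.ofReal (Real.pi - -Real.pi) := by
        congr 1
        rw [lintegral_indicator measurableSet_Icc, ← integral_inv_of_pos ha (ha.trans hab),
          intervalIntegral.integral_of_le hab.le, ← integral_Icc_eq_integral_Ioc,
          ofReal_integral_eq_lintegral_ofReal]
        · refine ContinuousOn.integrableOn_Icc ?_
          exact continuousOn_inv₀.mono fun x hx => (ha.trans_le hx.1).ne'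
        · refine (ae_restrict_iff' measurableSet_Icc).2 (Filter.Eventually.of_forall fun x hx => ?_)
          exact inv_nonneg.2 (ha.le.trans hx.1)
    _ = _ := by
        rw [← ENNReal.ofReal_mul (Real.log_nonneg (by rw [le_div_iff₀ ha]; linarith))]
        congr 1
        ring
    _ ≤ _ := le_rfl

open MeasureTheory in
lemma aux_area {D : Set ℂ} (hD : IsOpen D) {g : ℂ → ℂ} (hg : DifferentiableOn ℂ g D) (p : ℕ)
    (hv : ∀ w : ℂ, ∀ s : Finset ℂ, (∀ t ∈ s, t ∈ D ∧ g t = w) → s.card ≤ p)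
    (φ : ℂ → ENNReal) (hφ : Measurable φ) :
    ∫⁻ z in D, ENNReal.ofReal (‖deriv g z‖ ^ 2) * φ (g z) ≤ p * ∫⁻ w, φ w := by
  classical
  have hd : ∀ z ∈ D, HasDerivAt g (deriv g z) z := fun z hz =>
    (hg.differentiableAt (hD.mem_nhds hz)).hasDerivAt
  have hdet : ∀ z, |(((ContinuousLinearMap.toSpanSingleton ℂ (deriv g z)).restrictScalars ℝ).det)|
      = ‖deriv g z‖ ^ 2 := by
    intro z
    simp [ContinuousLinearMap.det, LinearMap.det_restrictScalars, Algebra.norm_complex_apply,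
      Complex.normSq_eq_norm_sq]
  have hd' : ∀ z ∈ D, HasFDerivAt g
      ((ContinuousLinearMap.toSpanSingleton ℂ (deriv g z)).restrictScalars ℝ) z :=
    fun z hz => (hd z hz).hasFDerivAt.restrictScalars ℝ
  have hcd : ContinuousOn (deriv g) D := (hg.deriv hD).continuousOn
  set D' : Set ℂ := D ∩ {z | deriv g z ≠ 0} with hD'
  have hD'o : IsOpen D' := hcd.isOpen_inter_preimage hD isOpen_ne
  have hloc : ∀ z : ℂ, ∃ V : Set ℂ, IsOpen V ∧ (z ∈ D' → z ∈ V) ∧ InjOn g V := by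
    intro z
    by_cases hz : z ∈ D'
    · have h1 : HasStrictDerivAt g (deriv g z) z :=
        (hg.analyticAt (hD.mem_nhds hz.1)).hasStrictDerivAt
      have h2 := h1.hasStrictFDerivAt_equiv hz.2
      refine ⟨(h2.toOpenPartialHomeomorph g).source, (h2.toOpenPartialHomeomorph g).open_source,
        fun _ => h2.mem_toOpenPartialHomeomorph_source, ?_⟩
      have := (h2.toOpenPartialHomeomorph g).injOn
      simpa using this
    · exact ⟨∅, isOpen_empty, fun h => absurd h hz, by simp⟩
  choose V hVo hVm hVi using hloc
  obtain ⟨t, htD, htc, htU⟩ := TopologicalSpace.countable_cover_nhdsWithin (f := V) (s := D')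
    (fun x hx => mem_nhdsWithin_of_mem_nhds ((hVo x).mem_nhds (hVm x hx)))
  obtain ⟨v, hv1, hv2⟩ : ∃ v : ℕ → Set ℂ, (∀ i, IsOpen (v i) ∧ InjOn g (v i)) ∧ D' ⊆ ⋃ i, v i := by
    rcases t.eq_empty_or_nonempty with rfl | hne
    · exact ⟨fun _ => ∅, by simp, by simpa using htU⟩
    · obtain ⟨e, he⟩ := htc.exists_eq_range hne
      refine ⟨fun i => V (e i), fun i => ⟨hVo _, hVi _⟩, ?_⟩
      subst he
      simpa using htU
  set E : ℕ → Set ℂ := fun i => D' ∩ disjointed v i with hE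
  have hEm : ∀ i, MeasurableSet (E i) := fun i =>
    hD'o.measurableSet.inter (MeasurableSet.disjointed (fun i => (hv1 i).1.measurableSet) i)
  have hEd : Pairwise (Function.onFun Disjoint E) := fun i j hij =>
    ((disjoint_disjointed v hij).mono inter_subset_right inter_subset_right)
  have hEU : ⋃ i, E i = D' := by
    rw [hE, ← inter_iUnion, iUnion_disjointed, inter_eq_left]
    exact hv2
  have hEi : ∀ i, InjOn g (E i) := fun i => (hv1 i).2.mono
    (inter_subset_right.trans (disjointed_subset v i))
  have hED : ∀ i, E i ⊆ D := fun i => inter_subset_left.trans inter_subset_left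
  have him : ∀ i, MeasurableSet (g '' E i) := fun i =>
    (hEm i).image_of_continuousOn_injOn (hg.continuousOn.mono (hED i)) (hEi i)
  have hstep : ∀ i, ∫⁻ z in E i, ENNReal.ofReal (‖deriv g z‖ ^ 2) * φ (g z)
      = ∫⁻ w, (g '' E i).indicator φ w := by
    intro i
    rw [lintegral_indicator (him i), lintegral_image_eq_lintegral_abs_det_fderiv_mul volume (hEm i)
      (fun x hx => (hd' x (hED i hx)).hasFDerivWithinAt) (hEi i)]
    simp only [hdet]
  have hDD' : ∫⁻ z in D, ENNReal.ofReal (‖deriv g z‖ ^ 2) * φ (g z)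
      = ∫⁻ z in D', ENNReal.ofReal (‖deriv g z‖ ^ 2) * φ (g z) := by
    rw [← lintegral_indicator hD.measurableSet, ← lintegral_indicator hD'o.measurableSet]
    congr 1
    ext z
    by_cases h1 : z ∈ D <;> by_cases h2 : deriv g z = 0 <;> simp [hD', indicator, h1, h2]
  rw [hDD', ← hEU, lintegral_iUnion hEm hEd]
  simp_rw [hstep]
  rw [← lintegral_tsum (fun i => (hφ.indicator (him i)).aemeasurable),
    ← lintegral_const_mul _ hφ]
  refine lintegral_mono fun w => ?_
  simp only
  rw [ENNReal.tsum_eq_iSup_sum]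
  refine iSup_le fun s => ?_
  have : ∑ i ∈ s, (g '' E i).indicator φ w = ((s.filter (fun i => w ∈ g '' E i)).card : ENNReal) * φ w := by
    simp only [indicator, Finset.sum_ite, Finset.sum_const, nsmul_eq_mul]
    simp
  rw [this]
  gcongr
  have hch : ∀ i : ℕ, ∃ x, w ∈ g '' E i → x ∈ E i ∧ g x = w := by
    intro i
    by_cases h : w ∈ g '' E i
    · obtain ⟨x, hx⟩ := h
      exact ⟨x, fun _ => hx⟩
    · exact ⟨0, fun h' => absurd h' h⟩
  choose x hx using hch
  have hinj : Set.InjOn x (s.filter (fun i => w ∈ g '' E i) : Finset ℕ) := by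
    intro i hi j hj hij
    by_contra hne
    have h1 := (hx i (Finset.mem_filter.1 (Finset.mem_coe.1 hi)).2).1
    have h2 := (hx j (Finset.mem_filter.1 (Finset.mem_coe.1 hj)).2).1
    rw [hij] at h1
    exact disjoint_left.1 (hEd hne) h1 h2
  rw [← Finset.card_image_of_injOn hinj]
  apply hv w
  intro y hy
  obtain ⟨i, hi, rfl⟩ := Finset.mem_image.1 hy
  have := hx i (Finset.mem_filter.1 hi).2
  exact ⟨hED i this.1, this.2⟩

open MeasureTheory in
lemma aux_sard {D : Set ℂ} (hD : IsOpen D) {g : ℂ → ℂ} (hg : DifferentiableOn ℂ g D)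
    {ε : ℝ} (hε : 0 < ε) : ∃ w : ℂ, ‖w‖ < ε ∧ ∀ z ∈ D, g z = w → deriv g z ≠ 0 := by
  have hd : ∀ z ∈ D, HasDerivAt g (deriv g z) z := fun z hz =>
    (hg.differentiableAt (hD.mem_nhds hz)).hasDerivAt
  have h0 := addHaar_image_eq_zero_of_det_fderivWithin_eq_zero (volume : Measure ℂ)
    (s := D ∩ {z | deriv g z = 0}) (f := g)
    (f' := fun z => (ContinuousLinearMap.toSpanSingleton ℂ (deriv g z)).restrictScalars ℝ)
    (fun z hz => ((hd z hz.1).hasFDerivAt.restrictScalars ℝ).hasFDerivWithinAt)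
    (by
      intro z hz
      have : deriv g z = 0 := hz.2
      simp [this, ContinuousLinearMap.det])
  by_contra! hcon
  have hsub : ball (0 : ℂ) ε ⊆ g '' (D ∩ {z | deriv g z = 0}) := by
    intro w hw
    obtain ⟨z, hz, h1, h2⟩ := hcon w (by simpa using hw)
    exact ⟨z, ⟨hz, h2⟩, h1⟩
  exact (measure_ball_pos volume (0 : ℂ) hε).ne' (measure_mono_null hsub h0)

lemma aux_factor {D : Set ℂ} (hD : IsOpen D) (Z : Finset ℂ) : ∀ (g : ℂ → ℂ),
    DifferentiableOn ℂ g D → (∀ z ∈ Z, z ∈ D ∧ g z = 0) →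
    ∃ q : ℂ → ℂ, DifferentiableOn ℂ q D ∧ ∀ t, g t = (∏ z ∈ Z, (t - z)) * q t := by
  classical
  induction Z using Finset.induction_on with
  | empty => exact fun g hg _ => ⟨g, hg, by simp⟩
  | insert a Z ha ih =>
    intro g hg hZ
    have haD := hZ a (Finset.mem_insert_self _ _)
    have h1 : DifferentiableOn ℂ (dslope g a) D :=
      (Complex.differentiableOn_dslope (hD.mem_nhds haD.1)).2 hg
    have h2 : ∀ t, (t - a) * dslope g a t = g t := by
      intro t
      have := sub_smul_dslope g a t
      simpa [haD.2] using this
    obtain ⟨q, hq, hq2⟩ := ih (dslope g a) h1 (by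
      intro z hz
      have hzD := hZ z (Finset.mem_insert_of_mem hz)
      refine ⟨hzD.1, ?_⟩
      have h3 := h2 z
      rw [hzD.2] at h3
      rcases mul_eq_zero.1 h3 with h | h
      · exact absurd (sub_eq_zero.1 h ▸ hz) ha
      · exact h)
    refine ⟨q, hq, fun t => ?_⟩
    rw [Finset.prod_insert ha, mul_assoc, ← hq2, h2]

lemma aux_pigeon (p : ℕ) (Z : Finset ℝ) (hZ : Z.card ≤ p) (a l : ℝ) (hl : 0 < l) :
    ∃ s : ℝ, a ≤ s - l / (2 * (p + 1)) ∧ s + l / (2 * (p + 1)) ≤ a + l ∧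
      ∀ x ∈ Z, l / (2 * (p + 1)) ≤ |s - x| := by
  classical
  set d := l / (2 * ((p : ℝ) + 1)) with hd
  have hdp : 0 < d := by positivity
  have hld : l = 2 * (p + 1) * d := by rw [hd]; field_simp
  by_contra! hcon
  have h1 : ∀ j : ℕ, ∃ x, j ∈ Finset.range (p + 1) → x ∈ Z ∧ |a + (2 * j + 1) * d - x| < d := by
    intro j
    by_cases hj : j ∈ Finset.range (p + 1)
    · have hj' : (j : ℝ) ≤ p := by
        exact_mod_cast Nat.lt_succ_iff.1 (Finset.mem_range.1 hj)
      obtain ⟨x, hx⟩ := hcon (a + (2 * j + 1) * d) (by nlinarith [(Nat.cast_nonneg j : (0:ℝ) ≤ j)])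
        (by rw [hld]; nlinarith)
      exact ⟨x, fun _ => hx⟩
    · exact ⟨0, fun h => absurd h hj⟩
  choose x hx using h1
  obtain ⟨i, hi, j, hj, hij, he⟩ := Finset.exists_ne_map_eq_of_card_lt_of_maps_to
    (s := Finset.range (p + 1)) (t := Z) (f := x) (by simpa using Nat.lt_succ_of_le hZ)
    (fun j hj => (hx j hj).1)
  have h1 := (hx i hi).2
  have h2 := (hx j hj).2
  rw [he] at h1
  rw [abs_lt] at h1 h2
  have h3 : ((i : ℝ) - j) * d < d := by nlinarith
  have h4 : ((j : ℝ) - i) * d < d := by nlinarith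
  rcases lt_or_gt_of_ne hij with h | h
  · have : (i : ℝ) + 1 ≤ j := by exact_mod_cast h
    nlinarith
  · have : (j : ℝ) + 1 ≤ i := by exact_mod_cast h
    nlinarith

open MeasureTheory in
lemma aux_circ {D : Set ℂ} (hD : IsOpen D) {g : ℂ → ℂ} (hg : DifferentiableOn ℂ g D)
    {s a b : ℝ} (hs : 0 < s) (ha : 0 < a) (hab : a < b)
    (hsD : ∀ z : ℂ, ‖z‖ = s → z ∈ D ∧ g z ≠ 0)
    (hx : ∃ x : ℂ, ‖x‖ = s ∧ ‖g x‖ ≤ a) (hy : ∃ y : ℂ, ‖y‖ = s ∧ b ≤ ‖g y‖) :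
    ENNReal.ofReal (Real.log (b / a) ^ 2 / (2 * Real.pi)) ≤
      ∫⁻ θ in Ioo (-Real.pi) Real.pi, ENNReal.ofReal (s ^ 2) *
        (ENNReal.ofReal (‖deriv g (circleMap 0 s θ)‖ ^ 2) * auxPhi a b (g (circleMap 0 s θ))) := by
  have hb : 0 < b := ha.trans hab
  have hns : ∀ θ, ‖circleMap 0 s θ‖ = s := fun θ => by simp [norm_circleMap_zero, abs_of_pos hs]
  set γ : ℝ → ℂ := fun θ => g (circleMap 0 s θ) with hγ
  set γ' : ℝ → ℂ := fun θ => deriv g (circleMap 0 s θ) * (circleMap 0 s θ * Complex.I) with hγ'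
  have hne : ∀ θ, γ θ ≠ 0 := fun θ => (hsD _ (hns θ)).2
  have hdγ : ∀ θ, HasDerivAt γ (γ' θ) θ := by
    intro θ
    have h1 : HasDerivAt g (deriv g (circleMap 0 s θ)) (circleMap 0 s θ) :=
      (hg.differentiableAt (hD.mem_nhds (hsD _ (hns θ)).1)).hasDerivAt
    exact h1.comp θ (hasDerivAt_circleMap 0 s θ)
  have hcγ : Continuous γ := continuous_iff_continuousAt.2 fun x => (hdγ x).continuousAt
  have hcd : Continuous fun θ => deriv g (circleMap 0 s θ) :=
    (hg.deriv hD).continuousOn.comp_continuous (continuous_circleMap 0 s)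
      fun θ => (hsD _ (hns θ)).1
  have hcγ' : Continuous γ' := by
    have := continuous_circleMap 0 s
    fun_prop
  have hnp : ∀ θ, 0 < ‖γ θ‖ := fun θ => norm_pos_iff.2 (hne θ)
  set φ : ℝ → ℝ := fun θ => (1 / 2) * Real.log (‖γ θ‖ ^ 2) with hφ
  set φ' : ℝ → ℝ := fun θ => (1 / 2) * (2 * inner ℝ (γ θ) (γ' θ) / ‖γ θ‖ ^ 2) with hφ'
  have hφl : ∀ θ, φ θ = Real.log ‖γ θ‖ := fun θ => by
    simp only [hφ, Real.log_pow]; push_cast; ring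
  have hdφ : ∀ θ, HasDerivAt φ (φ' θ) θ := fun θ =>
    (((hdγ θ).norm_sq).log (pow_pos (hnp θ) 2).ne').const_mul _
  have hcφ' : Continuous φ' := by
    have : ∀ θ, ‖γ θ‖ ^ 2 ≠ 0 := fun θ => (pow_pos (hnp θ) 2).ne'
    have h2 : Continuous fun θ => inner ℝ (γ θ) (γ' θ) := hcγ.inner hcγ'
    exact continuous_const.mul ((continuous_const.mul h2).div (hcγ.norm.pow 2) this)
  have hpt : ∀ x : ℂ, ‖x‖ = s → circleMap 0 s x.arg = x := by
    intro x hx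
    rw [circleMap_zero, ← hx]
    exact Complex.norm_mul_exp_arg_mul_I x
  have harg : ∀ x : ℂ, x.arg ∈ Icc (-Real.pi) Real.pi := fun x =>
    ⟨(Complex.neg_pi_lt_arg x).le, Complex.arg_le_pi x⟩
  obtain ⟨x, hxs, hxa⟩ := hx
  obtain ⟨y, hys, hyb⟩ := hy
  have hL : Real.log a < Real.log b := Real.log_lt_log ha hab
  have key := aux_osc hdφ hcφ' hL (harg x) (harg y)
    (by rw [hφl]; simp only [hγ, hpt x hxs]; exact Real.log_le_log
          (norm_pos_iff.2 (hsD x hxs).2) hxa)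
    (by rw [hφl]; simp only [hγ, hpt y hys]; exact Real.log_le_log hb hyb)
  rw [Real.log_div hb.ne' ha.ne']
  refine key.trans (lintegral_mono fun θ => ?_)
  by_cases hθ : Real.log a ≤ φ θ ∧ φ θ ≤ Real.log b
  · rw [indicator_of_mem (by exact hθ)]
    rw [hφl, Real.log_le_log_iff ha (hnp θ), Real.log_le_log_iff (hnp θ) hb] at hθ
    have : auxPhi a b (g (circleMap 0 s θ)) = ENNReal.ofReal ((‖γ θ‖ ^ 2)⁻¹) := by
      unfold auxPhi
      rw [indicator_of_mem (by exact hθ)]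
    rw [this, ← ENNReal.ofReal_mul (by positivity), ← ENNReal.ofReal_mul (by positivity)]
    apply ENNReal.ofReal_le_ofReal
    have h1 : |inner ℝ (γ θ) (γ' θ)| ≤ ‖γ θ‖ * ‖γ' θ‖ := abs_real_inner_le_norm _ _
    have h2 : ‖γ' θ‖ = ‖deriv g (circleMap 0 s θ)‖ * s := by
      simp only [hγ', norm_mul, Complex.norm_I, mul_one, hns]
    have h3 : inner ℝ (γ θ) (γ' θ) ^ 2 ≤ (‖γ θ‖ * ‖γ' θ‖) ^ 2 := by
      rw [← sq_abs]; gcongr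
    have h4 : φ' θ ^ 2 = inner ℝ (γ θ) (γ' θ) ^ 2 / (‖γ θ‖ ^ 2) ^ 2 := by
      simp only [hφ']; ring
    rw [h4, div_le_iff₀ (pow_pos (pow_pos (hnp θ) 2) 2)]
    refine h3.trans (le_of_eq ?_)
    rw [h2]
    have := (hnp θ).ne'
    field_simp
  · rw [indicator_of_notMem (by exact hθ)]
    exact zero_le

open MeasureTheory in
lemma aux_annulus {g : ℂ → ℂ} (hg : DifferentiableOn ℂ g (ball 0 3)) (p : ℕ)
    (hv : ∀ w : ℂ, ∀ s : Finset ℂ, (∀ t ∈ s, t ∈ ball (0 : ℂ) 3 ∧ g t = w) → s.card ≤ p)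
    {u v a b : ℝ} (hu : 0 < u) (huv : u < v) (hv3 : v ≤ 3) (ha : 0 < a) (hab : a < b)
    (hne : ∀ z : ℂ, ‖z‖ ∈ Ioo u v → g z ≠ 0)
    (hx : ∀ s ∈ Ioo u v, ∃ x : ℂ, ‖x‖ = s ∧ ‖g x‖ ≤ a)
    (hy : ∀ s ∈ Ioo u v, ∃ y : ℂ, ‖y‖ = s ∧ b ≤ ‖g y‖) :
    Real.log (b / a) ≤ 12 * Real.pi ^ 2 * p / (v - u) := by
  classical
  have hpi := Real.pi_pos
  have hT : 0 < Real.log (b / a) := Real.log_pos (by rw [lt_div_iff₀ ha]; linarith)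
  set T := Real.log (b / a) with hTdef
  have h1 := (aux_area isOpen_ball hg p hv (auxPhi a b) (auxPhi_meas a b)).trans
    (mul_le_mul_right (auxPhi_int ha hab) _)
  set F : ℂ → ENNReal := (ball (0 : ℂ) 3).indicator fun z =>
    ENNReal.ofReal (‖deriv g z‖ ^ 2) * auxPhi a b (g z) with hF
  have hFm : Measurable F := by
    have e : F = (ball (0 : ℂ) 3).indicator fun z =>
        ENNReal.ofReal (‖deriv g z‖ ^ 2) * auxPhi a b ((ball (0 : ℂ) 3).piecewise g 0 z) := by
      ext z
      by_cases hz : z ∈ ball (0 : ℂ) 3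
      · simp only [hF, indicator_of_mem hz, piecewise_eq_of_mem _ _ _ hz]
      · simp only [hF, indicator_of_notMem hz]
    rw [e]
    refine Measurable.indicator ?_ measurableSet_ball
    have h2 : Measurable ((ball (0 : ℂ) 3).piecewise g 0) :=
      hg.continuousOn.measurable_piecewise continuousOn_const measurableSet_ball
    have h3 := (auxPhi_meas a b).comp h2
    have h4 := measurable_deriv g
    exact ((h4.norm.pow_const 2).ennreal_ofReal).mul h3
  rw [← lintegral_indicator measurableSet_ball] at h1
  change ∫⁻ z, F z ≤ _ at h1
  have hsymm : ∀ q : ℝ × ℝ, Complex.polarCoord.symm q = circleMap 0 q.1 q.2 := by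
    intro q
    rw [Complex.polarCoord_symm_apply, circleMap_zero, Complex.exp_mul_I]
    simp
  have h2 : ENNReal.ofReal (T ^ 2 / (6 * Real.pi) * (v - u)) ≤ ∫⁻ z, F z := by
    rw [← Complex.lintegral_comp_polarCoord_symm]
    have hsub : Ioo u v ×ˢ Ioo (-Real.pi) Real.pi ⊆ polarCoord.target := by
      rw [polarCoord_target]
      exact prod_mono (fun r hr => hu.trans hr.1) subset_rfl
    refine le_trans ?_ (lintegral_mono_set hsub)
    simp only [hsymm]
    rw [Measure.volume_eq_prod, ← Measure.prod_restrict, lintegral_prod]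
    swap
    · refine Measurable.aemeasurable ?_
      have h5 : Continuous fun q : ℝ × ℝ => circleMap 0 q.1 q.2 := by
        simp only [circleMap_zero]; fun_prop
      exact (measurable_fst.ennreal_ofReal).smul (hFm.comp h5.measurable)
    calc ENNReal.ofReal (T ^ 2 / (6 * Real.pi) * (v - u))
        = ∫⁻ s in Ioo u v, ENNReal.ofReal (T ^ 2 / (6 * Real.pi)) := by
          rw [lintegral_const, Measure.restrict_apply_univ, Real.volume_Ioo,
            ENNReal.ofReal_mul (by positivity)]
      _ ≤ _ := by
          refine setLIntegral_mono' measurableSet_Ioo fun s hs => ?_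
          have hs0 : 0 < s := hu.trans hs.1
          have hsD : ∀ z : ℂ, ‖z‖ = s → z ∈ ball (0 : ℂ) 3 ∧ g z ≠ 0 := fun z hz =>
            ⟨by rw [mem_ball_zero_iff, hz]; linarith [hs.2], hne z (hz ▸ hs)⟩
          have key := aux_circ isOpen_ball hg hs0 ha hab hsD (hx s hs) (hy s hs)
          have e1 : ∀ θ, ENNReal.ofReal s • F (circleMap 0 s θ) = ENNReal.ofReal s⁻¹ *
              (ENNReal.ofReal (s ^ 2) * (ENNReal.ofReal (‖deriv g (circleMap 0 s θ)‖ ^ 2) *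
                auxPhi a b (g (circleMap 0 s θ)))) := by
            intro θ
            have hm : circleMap 0 s θ ∈ ball (0 : ℂ) 3 :=
              (hsD _ (by simp [norm_circleMap_zero, abs_of_pos hs0])).1
            rw [hF, indicator_of_mem hm, ← mul_assoc, ← ENNReal.ofReal_mul (by positivity),
              smul_eq_mul]
            congr 2
            field_simp
          simp only [e1]
          rw [lintegral_const_mul' _ _ ENNReal.ofReal_ne_top]
          refine le_trans ?_ (mul_le_mul_right key _)
          rw [← ENNReal.ofReal_mul (by positivity)]
          apply ENNReal.ofReal_le_ofReal
          have : s ≤ 3 := by linarith [hs.2]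
          rw [inv_mul_eq_div, div_div]
          exact div_le_div_of_nonneg_left (sq_nonneg _) (by positivity) (by nlinarith)
  have h3 := h2.trans h1
  rw [← ENNReal.ofReal_natCast, ← ENNReal.ofReal_mul (by positivity),
    ENNReal.ofReal_le_ofReal_iff (by positivity)] at h3
  rw [le_div_iff₀ (by linarith)]
  have h4 : T * (T * (v - u)) ≤ T * (12 * Real.pi ^ 2 * p) := by
    have h5 : T ^ 2 / (6 * Real.pi) * (v - u) * (6 * Real.pi) = T * (T * (v - u)) := by
      field_simp
    nlinarith [mul_le_mul_of_nonneg_right h3 (by positivity : 0 ≤ 6 * Real.pi)]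
  exact le_of_mul_le_mul_left h4 hT

lemma aux_maxmod {q : ℂ → ℂ} (hq : DifferentiableOn ℂ q (ball 0 3)) {t : ℂ} {s : ℝ}
    (ht : ‖t‖ < 2) (hs : 2 < s) (hs3 : s < 3) : ∃ x : ℂ, ‖x‖ = s ∧ ‖q t‖ ≤ ‖q x‖ := by
  have hs0 : s ≠ 0 := by linarith
  have hsub : closedBall (0 : ℂ) s ⊆ ball 0 3 := closedBall_subset_ball hs3
  have hd : DiffContOnCl ℂ q (ball 0 s) := by
    apply DifferentiableOn.diffContOnCl
    rw [closure_ball _ hs0]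
    exact hq.mono hsub
  obtain ⟨x, hx, hmax⟩ := Complex.exists_mem_frontier_isMaxOn_norm isBounded_ball
    ⟨(0 : ℂ), mem_ball_self (by linarith)⟩ hd
  rw [frontier_ball _ hs0, mem_sphere_zero_iff_norm] at hx
  refine ⟨x, hx, hmax (subset_closure ?_)⟩
  rw [mem_ball_zero_iff]; linarith

lemma aux_prod_lower {p : ℕ} {Z : Finset ℂ} (hZ : Z.card ≤ p) {η : ℝ} (hη : 0 ≤ η) (hη1 : η ≤ 1)
    {t : ℂ} (h : ∀ z ∈ Z, η ≤ ‖t - z‖) : η ^ p ≤ ‖∏ z ∈ Z, (t - z)‖ := by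
  rw [norm_prod]
  calc η ^ p ≤ η ^ Z.card := pow_le_pow_of_le_one hη hη1 hZ
    _ = ∏ z ∈ Z, η := by simp
    _ ≤ _ := Finset.prod_le_prod (fun _ _ => hη) h

lemma aux_prod_upper {p : ℕ} {Z : Finset ℂ} (hZ : Z.card ≤ p)
    {t : ℂ} (h : ∀ z ∈ Z, ‖t - z‖ ≤ 6) : ‖∏ z ∈ Z, (t - z)‖ ≤ 6 ^ p := by
  rw [norm_prod]
  calc _ ≤ ∏ z ∈ Z, (6 : ℝ) := Finset.prod_le_prod (fun _ _ => norm_nonneg _) h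
    _ = 6 ^ Z.card := by simp
    _ ≤ _ := pow_le_pow_right₀ (by norm_num) hZ

/-- constants -/
def auxEta (p : ℕ) : ℝ := 1 / (4 * (p + 1))

def auxK (p : ℕ) : ℝ := Real.exp (12 * Real.pi ^ 2 * p / (2 * auxEta p)) * (6 ^ p / auxEta p ^ p)

lemma auxEta_pos (p : ℕ) : 0 < auxEta p := by unfold auxEta; positivity

lemma auxEta_le (p : ℕ) : auxEta p ≤ 1 := by
  unfold auxEta
  rw [div_le_one (by positivity)]
  have : (0 : ℝ) ≤ p := Nat.cast_nonneg p
  linarith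

lemma aux_q_osc {g : ℂ → ℂ} (hg : DifferentiableOn ℂ g (ball 0 3)) (p : ℕ)
    (hv : ∀ w : ℂ, ∀ s : Finset ℂ, (∀ t ∈ s, t ∈ ball (0 : ℂ) 3 ∧ g t = w) → s.card ≤ p)
    (Z : Finset ℂ) (hZ : Z.card ≤ p) (hZD : ∀ z ∈ Z, z ∈ ball (0 : ℂ) 3)
    (q : ℂ → ℂ) (hq : DifferentiableOn ℂ q (ball 0 3)) (hq0 : ∀ t ∈ ball (0 : ℂ) 3, q t ≠ 0)
    (hgq : ∀ t, g t = (∏ z ∈ Z, (t - z)) * q t)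
    {t1 t2 : ℂ} (h1 : ‖t1‖ < 2) (h2 : ‖t2‖ < 2) : ‖q t1‖ ≤ auxK p * ‖q t2‖ := by
  classical
  have hη := auxEta_pos p
  have hη1 := auxEta_le p
  set η := auxEta p with hηd
  obtain ⟨s0, hs1, hs2, hs3⟩ := aux_pigeon p (Z.image norm) (Finset.card_image_le.trans hZ) 2 1
    one_pos
  have hδ : 1 / (2 * ((p : ℝ) + 1)) = 2 * η := by
    rw [hηd, auxEta]; field_simp; norm_num
  rw [hδ] at hs1 hs2 hs3
  have hfar : ∀ x : ℂ, ‖x‖ ∈ Ioo (s0 - η) (s0 + η) → ∀ z ∈ Z, η ≤ ‖x - z‖ := by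
    intro x hx z hz
    have h3 := hs3 ‖z‖ (Finset.mem_image_of_mem _ hz)
    have h4 : |‖x‖ - ‖z‖| ≤ ‖x - z‖ := abs_norm_sub_norm_le x z
    have h5 : |s0 - ‖x‖| ≤ η := abs_le.2 ⟨by linarith [hx.2], by linarith [hx.1]⟩
    have h6 := abs_sub_le s0 ‖x‖ ‖z‖
    linarith
  have hqt : ∀ t : ℂ, ‖t‖ < 3 → 0 < ‖q t‖ := fun t ht =>
    norm_pos_iff.2 (hq0 t (mem_ball_zero_iff.2 ht))
  have hq1 := hqt t1 (by linarith)
  have hq2 := hqt t2 (by linarith)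
  have hηp : 0 < η ^ p := pow_pos hη p
  set b := η ^ p * ‖q t1‖ with hb
  set a := 6 ^ p * ‖q t2‖ with ha
  have ha0 : 0 < a := by positivity
  have hE : 1 ≤ Real.exp (12 * Real.pi ^ 2 * p / (2 * η)) :=
    Real.one_le_exp (by positivity)
  have hfin : b ≤ Real.exp (12 * Real.pi ^ 2 * p / (2 * η)) * a := by
    rcases le_or_gt b a with hba | hab
    · nlinarith
    have hlt : ∀ s ∈ Ioo (s0 - η) (s0 + η), 2 < s ∧ s < 3 := fun s hs =>
      ⟨by linarith [hs.1], by linarith [hs.2]⟩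
    have key := aux_annulus hg p hv (u := s0 - η) (v := s0 + η) (a := a) (b := b)
      (by linarith) (by linarith) (by linarith) ha0 hab ?_ ?_ ?_
    · have e : s0 + η - (s0 - η) = 2 * η := by ring
      rw [e, Real.log_le_iff_le_exp (div_pos (ha0.trans hab) ha0), div_le_iff₀ ha0] at key
      exact key
    · intro z hz
      rw [hgq]
      refine mul_ne_zero ?_ (hq0 z (mem_ball_zero_iff.2 (hlt _ hz).2))
      have := aux_prod_lower hZ hη.le hη1 (hfar z hz)
      exact norm_pos_iff.1 (hηp.trans_le this)
    · intro s hs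
      obtain ⟨x, hx, hxq⟩ := aux_maxmod (q := fun t => (q t)⁻¹) (hq.inv hq0) h2 (hlt s hs).1
        (hlt s hs).2
      refine ⟨x, hx, ?_⟩
      rw [norm_inv, norm_inv, inv_le_inv₀ hq2 (hqt x (by rw [hx]; exact (hlt s hs).2))] at hxq
      rw [hgq, norm_mul]
      have := aux_prod_upper hZ (t := x) (fun z hz => by
        have hz3 := mem_ball_zero_iff.1 (hZD z hz)
        have := norm_sub_le x z
        linarith [(hlt s hs).2])
      exact mul_le_mul this hxq (norm_nonneg _) (by positivity)
    · intro s hs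
      obtain ⟨x, hx, hxq⟩ := aux_maxmod hq h1 (hlt s hs).1 (hlt s hs).2
      refine ⟨x, hx, ?_⟩
      rw [hgq, norm_mul]
      have := aux_prod_lower hZ hη.le hη1 (hfar x (hx ▸ hs))
      exact mul_le_mul this hxq (norm_nonneg _) (norm_nonneg _)
  unfold auxK
  rw [← hηd]
  calc ‖q t1‖ = b / η ^ p := by rw [hb]; field_simp
    _ ≤ (Real.exp (12 * Real.pi ^ 2 * p / (2 * η)) * a) / η ^ p := by gcongr
    _ = _ := by rw [ha]; ring

def auxC (p : ℕ) : ℝ := 6 ^ p * auxK p / (2 * auxEta p) ^ p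

lemma auxC_ge (p : ℕ) : 1 ≤ auxC p := by
  have hη := auxEta_pos p
  have hη1 := auxEta_le p
  have h2 : 2 * auxEta p ≤ 6 := by linarith
  unfold auxC auxK
  rw [le_div_iff₀ (by positivity), one_mul]
  have hE : 1 ≤ Real.exp (12 * Real.pi ^ 2 * p / (2 * auxEta p)) :=
    Real.one_le_exp (by positivity)
  have h3 : 1 ≤ (6 : ℝ) ^ p / auxEta p ^ p := by
    rw [← div_pow]
    exact one_le_pow₀ (by rw [le_div_iff₀ hη]; linarith)
  have h4 := one_le_mul_of_one_le_of_one_le hE h3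
  calc (2 * auxEta p) ^ p ≤ 6 ^ p := pow_le_pow_left₀ (by positivity) h2 p
    _ ≤ _ := le_mul_of_one_le_right (by positivity) h4

lemma aux_simple {g : ℂ → ℂ} (hg : DifferentiableOn ℂ g (ball 0 3)) (p : ℕ)
    (hv : ∀ w : ℂ, ∀ s : Finset ℂ, (∀ t ∈ s, t ∈ ball (0 : ℂ) 3 ∧ g t = w) → s.card ≤ p)
    (hsimp : ∀ z ∈ ball (0 : ℂ) 3, g z = 0 → deriv g z ≠ 0)
    {ρ m : ℝ} (hρ : 0 < ρ) (hρ1 : ρ ≤ 1) (hm : ∀ t : ℂ, ‖t‖ < ρ → ‖g t‖ ≤ m)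
    {t : ℂ} (ht : ‖t‖ < 2) : ‖g t‖ ≤ auxC p / ρ ^ p * m := by
  classical
  have hη := auxEta_pos p
  have hη1 := auxEta_le p
  set S : Set ℂ := {t | t ∈ ball (0 : ℂ) 3 ∧ g t = 0} with hS
  have hSf : S.Finite := by
    by_contra hinf
    obtain ⟨s, hs, hc⟩ := Set.Infinite.exists_subset_card_eq hinf (p + 1)
    have := hv 0 s (fun t ht => hs ht)
    omega
  set Z := hSf.toFinset with hZd
  have hZm : ∀ z, z ∈ Z ↔ z ∈ ball (0 : ℂ) 3 ∧ g z = 0 := fun z => by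
    rw [hZd, Set.Finite.mem_toFinset]; rfl
  have hZ : Z.card ≤ p := hv 0 Z fun t ht => (hZm t).1 ht
  obtain ⟨q, hq, hgq⟩ := aux_factor isOpen_ball Z g hg fun z hz => (hZm z).1 hz
  have hq0 : ∀ t ∈ ball (0 : ℂ) 3, q t ≠ 0 := by
    intro z hz hqz
    have hgz : g z = 0 := by rw [hgq, hqz, mul_zero]
    apply hsimp z hz hgz
    have e : g = fun t => (∏ w ∈ Z, (t - w)) * q t := funext hgq
    have d1 : HasDerivAt q (deriv q z) z :=
      (hq.differentiableAt (isOpen_ball.mem_nhds hz)).hasDerivAt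
    have d2 : DifferentiableAt ℂ (fun t => ∏ w ∈ Z, (t - w)) z := by fun_prop
    have hP : ∏ w ∈ Z, (z - w) = 0 :=
      Finset.prod_eq_zero ((hZm z).2 ⟨hz, hgz⟩) (sub_self z)
    have e2 : g = (fun t => ∏ w ∈ Z, (t - w)) * q := e
    rw [e2, (d2.hasDerivAt.mul d1).deriv, hqz, hP]
    ring
  obtain ⟨s0, hs1, hs2, hs3⟩ := aux_pigeon p (Z.image Complex.re) (Finset.card_image_le.trans hZ)
    0 ρ hρ
  have hδ : ρ / (2 * ((p : ℝ) + 1)) = 2 * auxEta p * ρ := by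
    rw [auxEta]; field_simp; norm_num
  rw [hδ] at hs1 hs2 hs3
  have hd0 : 0 < 2 * auxEta p * ρ := by positivity
  set t2 : ℂ := (s0 : ℂ) with ht2
  have hnt2 : ‖t2‖ = s0 := by
    rw [ht2, Complex.norm_real, Real.norm_eq_abs, abs_of_pos (by linarith)]
  have hlow : (2 * auxEta p * ρ) ^ p ≤ ‖∏ z ∈ Z, (t2 - z)‖ := by
    refine aux_prod_lower hZ hd0.le (by linarith) fun z hz => ?_
    refine (hs3 z.re (Finset.mem_image_of_mem _ hz)).trans ?_
    have := Complex.abs_re_le_norm (t2 - z)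
    simpa [ht2] using this
  have hup : ‖∏ z ∈ Z, (t - z)‖ ≤ 6 ^ p := aux_prod_upper hZ fun z hz => by
    have hz3 := mem_ball_zero_iff.1 ((hZm z).1 hz).1
    have := norm_sub_le t z
    linarith
  have hosc := aux_q_osc hg p hv Z hZ (fun z hz => ((hZm z).1 hz).1) q hq hq0 hgq (t1 := t)
    (t2 := t2) ht (by rw [hnt2]; linarith)
  have hmt := hm t2 (by rw [hnt2]; linarith)
  rw [hgq, norm_mul] at hmt
  have hK : 0 < auxK p := by unfold auxK; positivity
  have hq2 : ‖q t2‖ ≤ m / (2 * auxEta p * ρ) ^ p := by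
    rw [le_div_iff₀ (by positivity)]
    nlinarith [norm_nonneg (q t2)]
  calc ‖g t‖ = ‖∏ z ∈ Z, (t - z)‖ * ‖q t‖ := by rw [hgq, norm_mul]
    _ ≤ 6 ^ p * (auxK p * (m / (2 * auxEta p * ρ) ^ p)) := by
        gcongr
        exact hosc.trans (by gcongr)
    _ = _ := by unfold auxC; rw [mul_pow]; field_simp

lemma aux_disc {g : ℂ → ℂ} (hg : DifferentiableOn ℂ g (ball 0 3)) (p : ℕ)
    (hv : ∀ w : ℂ, ∀ s : Finset ℂ, (∀ t ∈ s, t ∈ ball (0 : ℂ) 3 ∧ g t = w) → s.card ≤ p)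
    {ρ m : ℝ} (hρ : 0 < ρ) (hρ1 : ρ ≤ 1) (hm : ∀ t : ℂ, ‖t‖ < ρ → ‖g t‖ ≤ m)
    {t : ℂ} (ht : ‖t‖ < 2) : ‖g t‖ ≤ auxC p / ρ ^ p * m := by
  have hC : 0 < auxC p / ρ ^ p := div_pos (by linarith [auxC_ge p]) (by positivity)
  set C := auxC p / ρ ^ p with hCd
  refine le_of_forall_pos_le_add fun ε hε => ?_
  obtain ⟨w, hw, hws⟩ := aux_sard isOpen_ball hg (ε := ε / (C + 1)) (by positivity)
  have key := aux_simple (g := fun t => g t - w) (hg.sub_const w) p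
    (fun w' s hs => hv (w' + w) s fun t ht => ⟨(hs t ht).1, by
      rw [← (hs t ht).2]; ring⟩)
    (fun z hz h0 => by
      rw [deriv_sub_const]
      exact hws z hz (sub_eq_zero.1 h0)) hρ hρ1 (m := m + ‖w‖)
    (fun t ht => (norm_sub_le _ _).trans (by linarith [hm t ht])) ht
  rw [← hCd] at key
  have h1 : ‖g t‖ ≤ ‖g t - w‖ + ‖w‖ := by
    have := norm_add_le (g t - w) w
    simpa using this
  rw [lt_div_iff₀ (by positivity)] at hw
  nlinarith

lemma aux_ball {n p : ℕ} {F : EuclideanSpace ℂ (Fin n) → ℂ}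
    (hF : AnalyticOnNhd ℂ F (ball 0 4)) (hv : SectionallyPValentOn F (ball 0 4) p)
    {ρ m : ℝ} (hρ : 0 < ρ) (hρ1 : ρ ≤ 1) {c : EuclideanSpace ℂ (Fin n)}
    (hc : ball c ρ ⊆ ball 0 1) (hm : ∀ x ∈ ball c ρ, ‖F x‖ ≤ m)
    {z : EuclideanSpace ℂ (Fin n)} (hz : z ∈ ball (0 : EuclideanSpace ℂ (Fin n)) 1) :
    ‖F z‖ ≤ auxC p / ρ ^ p * m := by
  have hc1 : ‖c‖ < 1 := mem_ball_zero_iff.1 (hc (mem_ball_self hρ))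
  have hz1 : ‖z‖ < 1 := mem_ball_zero_iff.1 hz
  have hK : 1 ≤ auxC p / ρ ^ p := by
    rw [le_div_iff₀ (by positivity), one_mul]
    exact (pow_le_one₀ hρ.le hρ1).trans (auxC_ge p)
  have hm0 : 0 ≤ m := (norm_nonneg _).trans (hm c (mem_ball_self hρ))
  by_cases hzc : z = c
  · rw [hzc]
    exact (hm c (mem_ball_self hρ)).trans (le_mul_of_one_le_left hm0 hK)
  have hd : 0 < ‖z - c‖ := norm_pos_iff.2 (sub_ne_zero.2 hzc)
  have hd2 : ‖z - c‖ < 2 := (norm_sub_le _ _).trans_lt (by linarith)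
  set b : EuclideanSpace ℂ (Fin n) := ((‖z - c‖⁻¹ : ℝ) : ℂ) • (z - c) with hb
  have hnb : ‖b‖ = 1 := by
    rw [hb, norm_smul, Complex.norm_real, norm_inv, norm_norm, inv_mul_cancel₀ hd.ne']
  have hb0 : b ≠ 0 := norm_pos_iff.1 (by rw [hnb]; norm_num)
  have hmem : ∀ t : ℂ, ‖t‖ < 3 → c + t • b ∈ ball (0 : EuclideanSpace ℂ (Fin n)) 4 := by
    intro t ht
    rw [mem_ball_zero_iff]
    have := norm_add_le c (t • b)
    rw [norm_smul, hnb] at this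
    linarith
  have key := aux_disc (g := fun t : ℂ => F (c + t • b)) (p := p) (ρ := ρ) (m := m)
    (t := ((‖z - c‖ : ℝ) : ℂ)) ?_ ?_ hρ hρ1 ?_ ?_
  · have e : c + ((‖z - c‖ : ℝ) : ℂ) • b = z := by
      rw [hb, smul_smul, ← Complex.ofReal_mul, mul_inv_cancel₀ hd.ne', Complex.ofReal_one, one_smul]
      abel
    simpa only [e] using key
  · intro t ht
    have h1 : DifferentiableAt ℂ F (c + t • b) :=
      (hF _ (hmem t (mem_ball_zero_iff.1 ht))).differentiableAt
    have h2 : DifferentiableAt ℂ (fun t : ℂ => c + t • b) t := by fun_prop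
    exact (DifferentiableAt.comp t h1 h2).differentiableWithinAt
  · intro w s hs
    exact hv c b hb0 w s fun t ht => ⟨hmem t (mem_ball_zero_iff.1 (hs t ht).1), (hs t ht).2⟩
  · intro t ht
    apply hm
    rw [mem_ball, dist_eq_norm, add_sub_cancel_left, norm_smul, hnb]
    linarith
  · rw [Complex.norm_real, norm_norm]; exact hd2

lemma aux_chart {n N p : ℕ} {G Y : Set (EuclideanSpace ℂ (Fin N))}
    (U : DoublingCovering n N G Y) {f : EuclideanSpace ℂ (Fin N) → ℂ} (j : Fin U.kappa)
    (hF : AnalyticOnNhd ℂ (f ∘ U.psi j) (ball 0 4))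
    (hv : SectionallyPValentOn (f ∘ U.psi j) (ball 0 4) p)
    {ρ m : ℝ} (hρ : 0 < ρ) (hρ1 : ρ ≤ 1) {S : Set (EuclideanSpace ℂ (Fin N))}
    (hS : U.RadGe j S ρ) (hm : ∀ x ∈ S, ‖f x‖ ≤ m) :
    ∀ x ∈ U.chart j, ‖f x‖ ≤ auxC p / ρ ^ p * m := by
  obtain ⟨c, hc⟩ := hS
  rintro _ ⟨y, hy, rfl⟩
  exact aux_ball hF hv hρ hρ1 (fun x hx => (hc hx).1) (fun x hx => hm _ (hc hx).2.2) hy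

/-- Lower bound on the number of charts of a doubling covering in terms of a doubling
constant: for every `p ≥ 1` there is `c_p ≥ 1` (the constant from the non-concentric
doubling inequality) such that if `f` is analytic and sectionally `p`-valent in all charts
of a doubling covering `𝒰` of `G`, `Ω ⊆ G` is compact, `0 < ρ ≤ 1`, every point of `G` is
reached from `Ω` by a chain of at most `ℓ(𝒰) ≤ κ(𝒰)` charts with all relevant radii at
least `ρ`, `c_p/ρ^p > 1` and `sup_Ω |f| > 0`, then
`κ(𝒰) ≥ log(sup_G |f| / sup_Ω |f|) / log(c_p/ρ^p)`. -/
theorem chart_number_lower_bound (p : ℕ) (hp : 1 ≤ p) :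
    ∃ c : ℝ, 1 ≤ c ∧
      ∀ (n N : ℕ) (G Y : Set (EuclideanSpace ℂ (Fin N)))
        (U : DoublingCovering n N G Y), IsCompact G →
      ∀ f : EuclideanSpace ℂ (Fin N) → ℂ,
        (∀ j, AnalyticOnNhd ℂ (f ∘ U.psi j) (ball (0 : EuclideanSpace ℂ (Fin n)) 4)) →
        (∀ j, SectionallyPValentOn (f ∘ U.psi j) (ball (0 : EuclideanSpace ℂ (Fin n)) 4) p) →
      ∀ Ω : Set (EuclideanSpace ℂ (Fin N)), IsCompact Ω → Ω ⊆ G →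
      ∀ ρ : ℝ, 0 < ρ → ρ ≤ 1 →
      ∀ L : ℕ, 1 ≤ L → L ≤ U.kappa →
        (∀ z ∈ G, U.ChainFrom Ω ρ L z) →
        1 < c / ρ ^ p →
        0 < sSup ((fun v => ‖f v‖) '' Ω) →
        Real.log (sSup ((fun v => ‖f v‖) '' G) / sSup ((fun v => ‖f v‖) '' Ω)) /
            Real.log (c / ρ ^ p) ≤ (U.kappa : ℝ) := by
  refine ⟨auxC p, auxC_ge p, ?_⟩
  intro n N G Y U hG f hF hv Ω hΩ hΩG ρ hρ hρ1 L hL hLk hchain hK hpos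
  set S := sSup ((fun v => ‖f v‖) '' Ω) with hS
  set K := auxC p / ρ ^ p with hKd
  have hbdd : BddAbove ((fun v => ‖f v‖) '' Ω) := by
    by_contra h
    rw [hS, Real.sSup_of_not_bddAbove h] at hpos
    exact lt_irrefl _ hpos
  have hne : Ω.Nonempty := by
    by_contra h
    rw [not_nonempty_iff_eq_empty] at h
    rw [hS, h, image_empty, Real.sSup_empty] at hpos
    exact lt_irrefl _ hpos
  have hΩS : ∀ x ∈ Ω, ‖f x‖ ≤ S := fun x hx => le_csSup hbdd (mem_image_of_mem _ hx)
  have hGb : ∀ z ∈ G, ‖f z‖ ≤ K ^ U.kappa * S := by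
    intro z hz
    obtain ⟨l, hl, js, hlL, hinj, hfirst, hcons, hlast⟩ := hchain z hz
    have hind : ∀ m : ℕ, (h : m < l) → ∀ x ∈ U.chart (js ⟨m, h⟩), ‖f x‖ ≤ K ^ (m + 1) * S := by
      intro m
      induction m with
      | zero =>
        intro h x hx
        have := aux_chart U (js ⟨0, hl⟩) (hF _) (hv _) hρ hρ1 hfirst hΩS x hx
        simpa using this
      | succ m ih =>
        intro h x hx
        have := aux_chart U (js ⟨m + 1, h⟩) (hF _) (hv _) hρ hρ1 (hcons m h).2
          (ih (by omega)) x hx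
        rw [pow_succ', mul_assoc]
        exact this
    have h1 := hind (l - 1) (by omega) z hlast
    refine h1.trans ?_
    gcongr
    · exact hK.le
    · omega
  have hGne : (G.Nonempty) := hne.mono hΩG
  have hsG : sSup ((fun v => ‖f v‖) '' G) ≤ K ^ U.kappa * S := by
    refine csSup_le (hGne.image _) ?_
    rintro _ ⟨z, hz, rfl⟩
    exact hGb z hz
  have hSG : S ≤ sSup ((fun v => ‖f v‖) '' G) := by
    refine csSup_le_csSup ?_ (hne.image _) (image_mono hΩG)
    refine ⟨K ^ U.kappa * S, ?_⟩
    rintro _ ⟨z, hz, rfl⟩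
    exact hGb z hz
  rw [div_le_iff₀ (Real.log_pos hK), ← Real.log_pow]
  apply Real.log_le_log (div_pos (hpos.trans_le hSG) hpos)
  rw [div_le_iff₀ hpos]
  exact hsG
end
end
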